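/- There exist universal constants L₀ > 0 and C > 0 such that for every L ≥ L₀ and every ℓ ∈ ℕ* ∪ {∞}, the selected estimator ŝ = ŝ(L, ℓ) satisfies C · E[ H²(s 1_A, ŝ) ] ≤ inf_{m ∈ 𝓜_ℓ} { E[ H²(s 1_A, V_m) ] + L |m| (log n)/n }. -/

import Mathlib

/-!
On a dyadic cube every statistic involved depends on the path only through the number `N` of
transitions falling in the cube, its compensator `E`, and the integrals of `1` and `√s` over the
cube (`cN`, `cE`, `cD`, `cR`). The pieces of `m' ∨ K` form a dyadic partition of `K`
(`vee_struct`), and on each piece the test compares two constants `u`, `v`.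

*Deterministic part.* If `ψ` and `φ` are the observed and the compensating parts of the test between
`u` and `v`, then `φ + s ψ` is at most a difference of squared Hellinger losses (`test_mean`), and
the variance term `s ψ²` is controlled by the same losses (`psiF_var`). Suppose the fluctuation
`∑ ψ_Q (N_Q - E_Q)` is at most `∑ ψ_Q² E_Q / 64` up to a term of order `|p| log n + Ξ_K`, uniformly
over the dyadic partitions `p` of a cube `K` and over `|ψ| ≤ 1` (`DevC`). A penalty with `L ≥ 192`
then absorbs the `log n` term, so the criterion at `m` is at most three times the loss of `ŝ_m`, up
to the penalty (`gammaSel_le`). Conversely, in the sum over pairs of cubes of `mhat` and `m`, the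
criterion at `mhat` tested against `m` detects the loss of `ŝ_{mhat}` (`local_lower`); here the pieces are
grouped by the cubes of `m`, so that the deviations involve only `Ξ_K` for `K ∈ m`. Together these
give `selection_bound`, a pathwise comparison of `ŝ_{mhat}` with `ŝ_m`.

*Probabilistic part.* For a partition `p` of a cube,
`exp (∑_Q (θ_Q N_Q - (exp θ_Q - 1) E_Q))` has expectation at most `1` (`exp_supermartingale`). Summing
over all `p` and over the `θ` in a grid of mesh `1 / (64 n)`, with weight `n ^ (-3 |p|)`, produces a
variable `xiE` of expectation at most `1` (`lintegral_xiE_le`): the generating series `G(y)` of the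
dyadic partitions satisfies `G ≤ y + G²`, hence `G(y) ≤ 2 y` for small `y` (`sum_partsF_le`). Finiteness
of this variable implies `DevC` with `Ξ = xiE` (`devC_of_xiE`). The deviation is thus controlled in
expectation simultaneously for all depths, which makes the case `ℓ = ∞` no harder than the others.

*Risk of a histogram.* On a cube the loss of `ŝ_m` is at most three times the bias plus
`2 (√N - √E)²` (`cH_hgt_le`), and `E[(√N - √E)²] = O(log n)` follows from the supermartingale with
`p = {K}` and `θ = ± 2^{-k}`, `0 ≤ k ≤ log₂ n` (`sqrt_dev_integral`).
-/

open MeasureTheory Real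
open scoped ENNReal
noncomputable section
open Classical

/-- Dyadic subinterval of `[0,1]`: `[l/2^j, (l+1)/2^j)`, closed on the right when
`l + 1 = 2^j`. -/
def dyadicI (j l : ℕ) : Set ℝ :=
  if l + 1 = 2 ^ j then Set.Icc ((l : ℝ) / 2 ^ j) 1
  else Set.Ico ((l : ℝ) / 2 ^ j) (((l : ℝ) + 1) / 2 ^ j)

/-- A dyadic cube of `[0,1]^{2d}` is coded by its level and its multi-index. -/
abbrev CubeIdx (d : ℕ) := ℕ × (Fin (2 * d) → ℕ)

/-- The subset of `[0,1]^{2d}` coded by a cube index. -/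
def cubeSet (d : ℕ) (K : CubeIdx d) : Set (Fin (2 * d) → ℝ) :=
  {x | ∀ i, x i ∈ dyadicI K.1 (K.2 i)}

/-- The `4^d` dyadic children (of half side length) of a dyadic cube. -/
def childrenC (d : ℕ) (K : CubeIdx d) : Finset (CubeIdx d) :=
  (Finset.univ : Finset (Fin (2 * d) → Fin 2)).image
    (fun ε => (K.1 + 1, fun i => 2 * K.2 i + (ε i : ℕ)))

/-- `IsPartOf d ℓ K m` means: `m` is a partition of the dyadic cube `K` into dyadic
cubes, obtained by at most `ℓ` recursive splitting steps (at each step, each current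
cube may be split into its `4^d` children). -/
inductive IsPartOf (d : ℕ) : ℕ → CubeIdx d → Finset (CubeIdx d) → Prop
  | leaf (ℓ : ℕ) (K : CubeIdx d) : IsPartOf d ℓ K {K}
  | node (ℓ : ℕ) (K : CubeIdx d) (f : CubeIdx d → Finset (CubeIdx d))
      (h : ∀ K' ∈ childrenC d K, IsPartOf d ℓ K' (f K')) :
      IsPartOf d (ℓ + 1) K ((childrenC d K).biUnion f)

/-- The root cube, coding `[0,1]^{2d}`. -/
def rootC (d : ℕ) : CubeIdx d := (0, fun _ => 0)

/-- The collection `𝓜_ℓ` of dyadic partitions of `[0,1]^{2d}` built in at most `ℓ` steps. -/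
def Mpart (d ℓ : ℕ) : Set (Finset (CubeIdx d)) := {m | IsPartOf d ℓ (rootC d) m}

/-- The collection `𝓜_∞ = ⋃_ℓ 𝓜_ℓ`. -/
def MpartInf (d : ℕ) : Set (Finset (CubeIdx d)) := ⋃ ℓ, Mpart d ℓ

/-- The collection `𝓜_ℓ` for `ℓ ∈ ℕ ∪ {∞}`. -/
def MpartE (d : ℕ) (ℓ : ℕ∞) : Set (Finset (CubeIdx d)) :=
  if ℓ = ⊤ then MpartInf d else Mpart d ℓ.toNat

/-- Concatenation of two points of `ℝ^d` into a point of `ℝ^{2d}`. -/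
def pairPt (d : ℕ) (x y : Fin d → ℝ) : Fin (2 * d) → ℝ :=
  fun i => if h : (i : ℕ) < d then x ⟨i, h⟩
    else y ⟨(i : ℕ) - d, by have := i.isLt; omega⟩

/-- The indicator function `1_K` of a dyadic cube, as a function on `ℝ^d × ℝ^d`. -/
def indC (d : ℕ) (K : CubeIdx d) (p : (Fin d → ℝ) × (Fin d → ℝ)) : ℝ :=
  (cubeSet d K).indicator (fun _ => (1 : ℝ)) (pairPt d p.1 p.2)

/-- The set `A = [0,1]^d × [0,1]^d` on which the transition density is estimated. -/
def unitSq (d : ℕ) : Set ((Fin d → ℝ) × (Fin d → ℝ)) :=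
  (Set.Icc (0 : Fin d → ℝ) 1) ×ˢ (Set.Icc (0 : Fin d → ℝ) 1)

/-- The empirical Hellinger-type squared distance
`H²(f,f') = (1/(2n)) ∑_{i<n} ∫ (√f(X_i,y) - √f'(X_i,y))² dy`. -/
def hellSq (d : ℕ) {Ω : Type*} (n : ℕ) (X : ℕ → Ω → (Fin d → ℝ)) (ω : Ω)
    (f g : (Fin d → ℝ) × (Fin d → ℝ) → ℝ) : ℝ :=
  (1 / (2 * n)) * ∑ i ∈ Finset.range n,
    ∫ y, (Real.sqrt (f (X i ω, y)) - Real.sqrt (g (X i ω, y))) ^ 2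

/-- The test statistic `T(f,f')` (conventions `0/0 = 0` are those of real division). -/
def Tstat (d : ℕ) {Ω : Type*} (n : ℕ) (X : ℕ → Ω → (Fin d → ℝ)) (ω : Ω)
    (f g : (Fin d → ℝ) × (Fin d → ℝ) → ℝ) : ℝ :=
  (1 / (2 * Real.sqrt 2 * n)) * (∑ i ∈ Finset.range n,
      ∫ y, Real.sqrt (f (X i ω, y) + g (X i ω, y)) *
        (Real.sqrt (g (X i ω, y)) - Real.sqrt (f (X i ω, y))))
  + (1 / (Real.sqrt 2 * n)) * (∑ i ∈ Finset.range n,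
      (Real.sqrt (g (X i ω, X (i + 1) ω)) - Real.sqrt (f (X i ω, X (i + 1) ω))) /
        Real.sqrt (f (X i ω, X (i + 1) ω) + g (X i ω, X (i + 1) ω)))
  + (1 / (2 * n)) * (∑ i ∈ Finset.range n,
      ∫ y, (f (X i ω, y) - g (X i ω, y)))

/-- The histogram estimator `ŝ_m` on a dyadic partition `m` (convention `0/0 = 0`). -/
def histEst (d : ℕ) {Ω : Type*} (n : ℕ) (X : ℕ → Ω → (Fin d → ℝ))
    (m : Finset (CubeIdx d)) (ω : Ω) : (Fin d → ℝ) × (Fin d → ℝ) → ℝ :=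
  fun p => ∑ K ∈ m,
    ((∑ i ∈ Finset.range n, indC d K (X i ω, X (i + 1) ω)) /
      (∑ i ∈ Finset.range n, ∫ y, indC d K (X i ω, y))) * indC d K p

/-- The set `V_m` of nonnegative piecewise constant functions on a dyadic partition `m`. -/
def VmD (d : ℕ) (m : Finset (CubeIdx d)) : Set ((Fin d → ℝ) × (Fin d → ℝ) → ℝ) :=
  {g | ∃ a : CubeIdx d → ℝ, (∀ K ∈ m, 0 ≤ a K) ∧
    g = fun p => ∑ K ∈ m, a K * indC d K p}

/-- `|m' ∨ K|`: the number of nonempty pieces `K' ∩ K`, `K' ∈ m'`. -/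
def veeCard (d : ℕ) (m' : Finset (CubeIdx d)) (K : CubeIdx d) : ℕ :=
  ((m'.filter fun K' => (cubeSet d K' ∩ cubeSet d K).Nonempty).image
    fun K' => cubeSet d K' ∩ cubeSet d K).card

/-- The penalty `L ⬝ c ⬝ log n / n` attached to a cardinality `c`. -/
def penC (L : ℝ) (n : ℕ) (c : ℕ) : ℝ := L * c * Real.log n / n

/-- `α = (1 - 1/√2)/2`. -/
def alphaC : ℝ := (1 - 1 / Real.sqrt 2) / 2

/-- Restriction `f ⬝ 1_{K ∩ K'}`. -/
def restr2 (d : ℕ) (f : (Fin d → ℝ) × (Fin d → ℝ) → ℝ) (K K' : CubeIdx d) :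
    (Fin d → ℝ) × (Fin d → ℝ) → ℝ :=
  fun p => f p * indC d K p * indC d K' p

/-- Restriction `f ⬝ 1_K`. -/
def restr1 (d : ℕ) (f : (Fin d → ℝ) × (Fin d → ℝ) → ℝ) (K : CubeIdx d) :
    (Fin d → ℝ) × (Fin d → ℝ) → ℝ :=
  fun p => f p * indC d K p

/-- The selection criterion `γ`. -/
def gammaSel (d : ℕ) {Ω : Type*} (n : ℕ) (X : ℕ → Ω → (Fin d → ℝ)) (L : ℝ) (ℓ : ℕ∞)
    (ω : Ω) (m : Finset (CubeIdx d)) : ℝ :=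
  (∑ K ∈ m, ⨆ m' : MpartE d ℓ,
      ((∑ K' ∈ (m' : Finset (CubeIdx d)),
          (alphaC * hellSq d n X ω (restr2 d (histEst d n X m ω) K K')
                (restr2 d (histEst d n X (m' : Finset (CubeIdx d)) ω) K K')
            + Tstat d n X ω (restr2 d (histEst d n X m ω) K K')
                (restr2 d (histEst d n X (m' : Finset (CubeIdx d)) ω) K K')))
        - penC L n (veeCard d (m' : Finset (CubeIdx d)) K)))
  + 2 * penC L n m.card

/-- `s ⬝ 1_A`, the target function restricted to `A = [0,1]^{2d}`. -/
def sIndA (d : ℕ) (s : (Fin d → ℝ) → (Fin d → ℝ) → ℝ) :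
    (Fin d → ℝ) × (Fin d → ℝ) → ℝ :=
  (unitSq d).indicator fun p => s p.1 p.2

end

noncomputable section
open Classical

/-! ### Dyadic cubes and partitions -/

lemma dyadicI_split (j l : ℕ) (x : ℝ) :
    x ∈ dyadicI j l ↔ (x ∈ dyadicI (j+1) (2*l) ∨ x ∈ dyadicI (j+1) (2*l+1)) := by
  have hp : (0:ℝ) < 2 ^ j := by positivity
  have h1 : ¬ (2 * l + 1 = 2 ^ (j+1)) := by rw [pow_succ]; omega
  have e1 : ((2 * l : ℕ) : ℝ) / 2 ^ (j+1) = l / 2 ^ j := by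
    push_cast; rw [pow_succ]; field_simp
  have e2 : (((2 * l : ℕ) : ℝ) + 1) / 2 ^ (j+1) = ((2 * l + 1 : ℕ) : ℝ) / 2 ^ (j+1) := by
    push_cast; rfl
  have e3 : (((2 * l + 1 : ℕ) : ℝ) + 1) / 2 ^ (j+1) = (l + 1) / 2 ^ j := by
    push_cast; rw [pow_succ]; field_simp; ring
  have l1 : (l : ℝ) / 2 ^ j ≤ ((2 * l + 1 : ℕ) : ℝ) / 2 ^ (j+1) := by
    rw [← e1]; gcongr; linarith
  have l2 : ((2 * l + 1 : ℕ) : ℝ) / 2 ^ (j+1) < (l + 1) / 2 ^ j := by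
    rw [← e3]; gcongr; push_cast; linarith
  unfold dyadicI
  rw [if_neg h1]
  by_cases h : l + 1 = 2 ^ j
  · have h2 : 2 * l + 1 + 1 = 2 ^ (j+1) := by rw [pow_succ]; omega
    have e4 : ((l:ℝ) + 1) / 2 ^ j = 1 := by
      have : ((l:ℝ) + 1) = 2 ^ j := by exact_mod_cast h
      rw [this]; field_simp
    rw [if_pos h, if_pos h2, e1, e2]
    rw [e4] at l2
    simp only [Set.mem_Icc, Set.mem_Ico]
    constructor
    · rintro ⟨a, b⟩
      rcases lt_or_ge x (((2 * l + 1 : ℕ) : ℝ) / 2 ^ (j+1)) with c | c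
      · exact Or.inl ⟨a, c⟩
      · exact Or.inr ⟨c, b⟩
    · rintro (⟨a, b⟩ | ⟨a, b⟩) <;> constructor <;> linarith
  · have h2 : ¬ (2 * l + 1 + 1 = 2 ^ (j+1)) := by rw [pow_succ]; omega
    rw [if_neg h, if_neg h2, e1, e2, e3]
    simp only [Set.mem_Ico]
    constructor
    · rintro ⟨a, b⟩
      rcases lt_or_ge x (((2 * l + 1 : ℕ) : ℝ) / 2 ^ (j+1)) with c | c
      · exact Or.inl ⟨a, c⟩
      · exact Or.inr ⟨c, b⟩
    · rintro (⟨a, b⟩ | ⟨a, b⟩) <;> constructor <;> linarith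

lemma dyadicI_disj (j l : ℕ) (x : ℝ) (hx : x ∈ dyadicI (j+1) (2*l))
    (hx' : x ∈ dyadicI (j+1) (2*l+1)) : False := by
  have h1 : ¬ (2 * l + 1 = 2 ^ (j+1)) := by rw [pow_succ]; omega
  have e2 : (((2 * l : ℕ) : ℝ) + 1) / 2 ^ (j+1) = ((2 * l + 1 : ℕ) : ℝ) / 2 ^ (j+1) := by
    push_cast; rfl
  unfold dyadicI at hx hx'
  rw [if_neg h1, e2] at hx
  split_ifs at hx'
  · exact absurd hx'.1 (not_le.2 hx.2)
  · exact absurd hx'.1 (not_le.2 hx.2)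

lemma dyadicI_nonempty (j l : ℕ) : (l : ℝ) / 2 ^ j ∈ dyadicI j l := by
  unfold dyadicI
  split_ifs with h
  · refine ⟨le_rfl, ?_⟩
    rw [div_le_one (by positivity)]
    have : ((l:ℝ) + 1) = 2 ^ j := by exact_mod_cast h
    linarith
  · refine ⟨le_rfl, ?_⟩
    gcongr; linarith

lemma cubeSet_nonempty (d : ℕ) (K : CubeIdx d) : (cubeSet d K).Nonempty :=
  ⟨fun i => (K.2 i : ℝ) / 2 ^ K.1, fun _ => dyadicI_nonempty _ _⟩

lemma child_sub (d : ℕ) (K K' : CubeIdx d) (h : K' ∈ childrenC d K) :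
    cubeSet d K' ⊆ cubeSet d K := by
  simp only [childrenC, Finset.mem_image, Finset.mem_univ, true_and] at h
  obtain ⟨ε, rfl⟩ := h
  intro x hx i
  rw [dyadicI_split]
  have := hx i
  simp only at this
  rcases Fin.exists_fin_two.1 ⟨ε i, rfl⟩ with h | h
  · left; rw [h] at this; simpa using this
  · right; rw [h] at this; simpa using this

lemma child_exists (d : ℕ) (K : CubeIdx d) (x : Fin (2*d) → ℝ) (hx : x ∈ cubeSet d K) :
    ∃ K' ∈ childrenC d K, x ∈ cubeSet d K' := by
  have : ∀ i, ∃ e : Fin 2, x i ∈ dyadicI (K.1+1) (2 * K.2 i + (e : ℕ)) := by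
    intro i
    rcases (dyadicI_split _ _ _).1 (hx i) with h | h
    · exact ⟨0, by simpa using h⟩
    · exact ⟨1, by simpa using h⟩
  choose ε hε using this
  exact ⟨_, Finset.mem_image.2 ⟨ε, Finset.mem_univ _, rfl⟩, hε⟩

lemma child_unique (d : ℕ) (K K₁ K₂ : CubeIdx d) (h₁ : K₁ ∈ childrenC d K)
    (h₂ : K₂ ∈ childrenC d K) (x : Fin (2*d) → ℝ) (hx₁ : x ∈ cubeSet d K₁)
    (hx₂ : x ∈ cubeSet d K₂) : K₁ = K₂ := by
  simp only [childrenC, Finset.mem_image, Finset.mem_univ, true_and] at h₁ h₂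
  obtain ⟨ε, rfl⟩ := h₁
  obtain ⟨η, rfl⟩ := h₂
  have : ε = η := by
    funext i
    have a := hx₁ i
    have b := hx₂ i
    simp only at a b
    rcases Fin.exists_fin_two.1 ⟨ε i, rfl⟩ with h | h <;>
    rcases Fin.exists_fin_two.1 ⟨η i, rfl⟩ with h' | h' <;> rw [h] at a ⊢ <;> rw [h'] at b ⊢
    · exact (dyadicI_disj K.1 (K.2 i) (x i) (by simpa using a) (by simpa using b)).elim
    · exact (dyadicI_disj K.1 (K.2 i) (x i) (by simpa using b) (by simpa using a)).elim
  rw [this]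

lemma children_card (d : ℕ) (hd : 0 < d) (K : CubeIdx d) : 2 ≤ (childrenC d K).card := by
  unfold childrenC
  rw [Finset.card_image_of_injective]
  · simp only [Finset.card_univ, Fintype.card_pi, Fintype.card_fin, Finset.prod_const]
    calc 2 = 2 ^ 1 := by norm_num
      _ ≤ 2 ^ (2*d) := Nat.pow_le_pow_right (by norm_num) (by omega)
  · intro ε η h
    simp only [Prod.mk.injEq, true_and] at h
    funext i
    have := congrFun h i
    ext
    simpa using this

lemma part_sub {d h : ℕ} {K : CubeIdx d} {m : Finset (CubeIdx d)} (hm : IsPartOf d h K m) :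
    ∀ Q ∈ m, cubeSet d Q ⊆ cubeSet d K := by
  induction hm with
  | leaf l K => intro Q hQ; rw [Finset.mem_singleton] at hQ; rw [hQ]
  | node l K f hf ih =>
    intro Q hQ
    obtain ⟨K', hK', hQ'⟩ := Finset.mem_biUnion.1 hQ
    exact (ih K' hK' Q hQ').trans (child_sub d K K' hK')

lemma part_exists {d h : ℕ} {K : CubeIdx d} {m : Finset (CubeIdx d)} (hm : IsPartOf d h K m) :
    ∀ x ∈ cubeSet d K, ∃ Q ∈ m, x ∈ cubeSet d Q := by
  induction hm with
  | leaf l K => intro x hx; exact ⟨K, Finset.mem_singleton_self K, hx⟩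
  | node l K f hf ih =>
    intro x hx
    obtain ⟨K', hK', hx'⟩ := child_exists d K x hx
    obtain ⟨Q, hQ, hxQ⟩ := ih K' hK' x hx'
    exact ⟨Q, Finset.mem_biUnion.2 ⟨K', hK', hQ⟩, hxQ⟩

lemma part_unique {d h : ℕ} {K : CubeIdx d} {m : Finset (CubeIdx d)} (hm : IsPartOf d h K m) :
    ∀ Q ∈ m, ∀ Q' ∈ m, ∀ x, x ∈ cubeSet d Q → x ∈ cubeSet d Q' → Q = Q' := by
  induction hm with
  | leaf l K =>
    intro Q hQ Q' hQ' x _ _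
    rw [Finset.mem_singleton] at hQ hQ'; rw [hQ, hQ']
  | node l K f hf ih =>
    intro Q hQ Q' hQ' x hx hx'
    obtain ⟨K₁, hK₁, hQ₁⟩ := Finset.mem_biUnion.1 hQ
    obtain ⟨K₂, hK₂, hQ₂⟩ := Finset.mem_biUnion.1 hQ'
    have : K₁ = K₂ := child_unique d K K₁ K₂ hK₁ hK₂ x
      (part_sub (hf K₁ hK₁) Q hQ₁ hx) (part_sub (hf K₂ hK₂) Q' hQ₂ hx')
    subst this
    exact ih K₁ hK₁ Q hQ₁ Q' hQ₂ x hx hx'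

/-- `DescC d R K`: the dyadic cube `K` is obtained from `R` by iterated splitting. -/
inductive DescC (d : ℕ) : CubeIdx d → CubeIdx d → Prop
  | refl (K : CubeIdx d) : DescC d K K
  | step (R K' K : CubeIdx d) (h : K' ∈ childrenC d R) (h' : DescC d K' K) : DescC d R K

lemma desc_sub {d : ℕ} {R K : CubeIdx d} (h : DescC d R K) : cubeSet d K ⊆ cubeSet d R := by
  induction h with
  | refl K => exact subset_rfl
  | step R K' K h h' ih => exact ih.trans (child_sub d R K' h)

lemma part_desc {d h : ℕ} {K : CubeIdx d} {m : Finset (CubeIdx d)} (hm : IsPartOf d h K m) :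
    ∀ Q ∈ m, DescC d K Q := by
  induction hm with
  | leaf l K => intro Q hQ; rw [Finset.mem_singleton] at hQ; rw [hQ]; exact DescC.refl K
  | node l K f hf ih =>
    intro Q hQ
    obtain ⟨K', hK', hQ'⟩ := Finset.mem_biUnion.1 hQ
    exact DescC.step K K' Q hK' (ih K' hK' Q hQ')

/-- A dyadic cube `K` below `R` is either contained in a cube of a given partition of `R`, or is
itself partitioned by some of the cubes of that partition. -/
lemma part_dichotomy {d : ℕ} {R K : CubeIdx d} (hd : DescC d R K) :
    ∀ (h : ℕ) (m : Finset (CubeIdx d)), IsPartOf d h R m →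
      (∃ K' ∈ m, cubeSet d K ⊆ cubeSet d K') ∨ (∃ p ⊆ m, ∃ h', IsPartOf d h' K p) := by
  induction hd with
  | refl K => intro h m hm; exact Or.inr ⟨m, subset_rfl, h, hm⟩
  | step R K' K hK' hd ih =>
    intro h m hm
    cases hm with
    | leaf l _ =>
      exact Or.inl ⟨R, Finset.mem_singleton_self R, desc_sub (DescC.step R K' K hK' hd)⟩
    | node l _ f hf =>
      rcases ih _ _ (hf K' hK') with ⟨Q, hQ, hs⟩ | ⟨p, hp, h', hp'⟩
      · exact Or.inl ⟨Q, Finset.mem_biUnion.2 ⟨K', hK', hQ⟩, hs⟩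
      · exact Or.inr ⟨p, hp.trans (Finset.subset_biUnion_of_mem f hK'), h', hp'⟩

lemma part_mono {d h : ℕ} {K : CubeIdx d} {m : Finset (CubeIdx d)} (hm : IsPartOf d h K m) :
    ∀ h', h ≤ h' → IsPartOf d h' K m := by
  induction hm with
  | leaf l K => intro h' _; exact IsPartOf.leaf h' K
  | node l K f hf ih =>
    intro h' hh
    obtain ⟨k, rfl⟩ : ∃ k, h' = k + 1 := ⟨h' - 1, by omega⟩
    exact IsPartOf.node k K f (fun K' hK' => ih K' hK' k (by omega))

/-- `PartC d K p`: `p` is a (finite, recursive) dyadic partition of the cube `K`. -/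
def PartC (d : ℕ) (K : CubeIdx d) (p : Finset (CubeIdx d)) : Prop := ∃ h, IsPartOf d h K p

lemma partE_part {d : ℕ} {ℓ : ℕ∞} {m : Finset (CubeIdx d)} (hm : m ∈ MpartE d ℓ) :
    PartC d (rootC d) m := by
  unfold MpartE at hm
  split_ifs at hm
  · obtain ⟨l, hl⟩ := Set.mem_iUnion.1 hm
    exact ⟨l, hl⟩
  · exact ⟨_, hm⟩

lemma partE_root (d : ℕ) (ℓ : ℕ∞) : {rootC d} ∈ MpartE d ℓ := by
  unfold MpartE
  split_ifs
  · exact Set.mem_iUnion.2 ⟨0, IsPartOf.leaf 0 _⟩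
  · exact IsPartOf.leaf _ _

lemma indC_of_mem {d : ℕ} {K : CubeIdx d} {p : (Fin d → ℝ) × (Fin d → ℝ)}
    (h : pairPt d p.1 p.2 ∈ cubeSet d K) : indC d K p = 1 := Set.indicator_of_mem h _

lemma indC_of_not_mem {d : ℕ} {K : CubeIdx d} {p : (Fin d → ℝ) × (Fin d → ℝ)}
    (h : pairPt d p.1 p.2 ∉ cubeSet d K) : indC d K p = 0 := Set.indicator_of_notMem h _

lemma indC_zero_or_one (d : ℕ) (K : CubeIdx d) (p : (Fin d → ℝ) × (Fin d → ℝ)) :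
    indC d K p = 0 ∨ indC d K p = 1 := by
  by_cases h : pairPt d p.1 p.2 ∈ cubeSet d K
  · exact Or.inr (indC_of_mem h)
  · exact Or.inl (indC_of_not_mem h)

lemma indC_nonneg (d : ℕ) (K : CubeIdx d) (p : (Fin d → ℝ) × (Fin d → ℝ)) :
    0 ≤ indC d K p := by
  rcases indC_zero_or_one d K p with h | h <;> rw [h]; norm_num

lemma indC_le_one (d : ℕ) (K : CubeIdx d) (p : (Fin d → ℝ) × (Fin d → ℝ)) :
    indC d K p ≤ 1 := by
  rcases indC_zero_or_one d K p with h | h <;> rw [h]; norm_num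

lemma indC_mul_of_sub {d : ℕ} {K K' : CubeIdx d} (h : cubeSet d K ⊆ cubeSet d K')
    (p : (Fin d → ℝ) × (Fin d → ℝ)) : indC d K p * indC d K' p = indC d K p := by
  by_cases hp : pairPt d p.1 p.2 ∈ cubeSet d K
  · rw [indC_of_mem hp, indC_of_mem (h hp), mul_one]
  · rw [indC_of_not_mem hp, zero_mul]

/-- Description of `m' ∨ K`: its pieces form a partition `p` of `K`, and `pr` sends each piece to
the cube of `m'` it comes from. -/
lemma vee_struct {d : ℕ} {R K : CubeIdx d} (hK : DescC d R K) {m' : Finset (CubeIdx d)}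
    (hm' : PartC d R m') :
    ∃ (p : Finset (CubeIdx d)) (pr : CubeIdx d → CubeIdx d), PartC d K p ∧
      p.card = veeCard d m' K ∧
      (∀ Q ∈ p, pr Q ∈ m') ∧ Set.InjOn pr p ∧
      (∀ Q ∈ p, cubeSet d Q = cubeSet d K ∩ cubeSet d (pr Q)) ∧
      (∀ K' ∈ m', K' ∉ p.image pr → Disjoint (cubeSet d K) (cubeSet d K')) ∧
      p.card ≤ 1 + (m'.filter fun K' => cubeSet d K' ⊆ cubeSet d K).card := by
  obtain ⟨h, hm⟩ := hm'
  rcases part_dichotomy hK h m' hm with ⟨K', hK', hs⟩ | ⟨p, hp, h', hp'⟩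
  · have hdis : ∀ K'' ∈ m', K'' ≠ K' → Disjoint (cubeSet d K) (cubeSet d K'') := by
      intro K'' h1 h2
      rw [Set.disjoint_left]
      intro x hx hx'
      exact h2 (part_unique hm K'' h1 K' hK' x hx' (hs hx))
    have hf : (m'.filter fun K' => (cubeSet d K' ∩ cubeSet d K).Nonempty) = {K'} := by
      ext K''
      simp only [Finset.mem_filter, Finset.mem_singleton]
      constructor
      · rintro ⟨h1, x, hx, hx'⟩
        by_contra h2
        exact Set.disjoint_left.1 (hdis K'' h1 h2) hx' hx
      · rintro rfl
        obtain ⟨x, hx⟩ := cubeSet_nonempty d K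
        exact ⟨hK', x, hs hx, hx⟩
    refine ⟨{K}, fun _ => K', ⟨0, IsPartOf.leaf 0 K⟩, ?_, ?_, ?_, ?_, ?_, ?_⟩
    · unfold veeCard
      rw [hf]; simp
    · intro Q _; exact hK'
    · intro a ha b hb _
      simp only [Finset.coe_singleton, Set.mem_singleton_iff] at ha hb
      rw [ha, hb]
    · intro Q hQ
      rw [Finset.mem_singleton] at hQ
      rw [hQ, Set.inter_eq_left.2 hs]
    · intro K'' h1 h2
      refine hdis K'' h1 ?_
      simpa using h2
    · simp
  · have hdis : ∀ K'' ∈ m', K'' ∉ p → Disjoint (cubeSet d K) (cubeSet d K'') := by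
      intro K'' h1 h2
      rw [Set.disjoint_left]
      intro x hx hx'
      obtain ⟨Q, hQ, hxQ⟩ := part_exists hp' x hx
      exact h2 (part_unique hm K'' h1 Q (hp hQ) x hx' hxQ ▸ hQ)
    have hf : (m'.filter fun K' => (cubeSet d K' ∩ cubeSet d K).Nonempty) = p := by
      ext K''
      simp only [Finset.mem_filter]
      constructor
      · rintro ⟨h1, x, hx, hx'⟩
        by_contra h2
        exact Set.disjoint_left.1 (hdis K'' h1 h2) hx' hx
      · intro h1
        obtain ⟨x, hx⟩ := cubeSet_nonempty d K''
        exact ⟨hp h1, x, hx, part_sub hp' K'' h1 hx⟩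
    refine ⟨p, id, ⟨h', hp'⟩, ?_, ?_, ?_, ?_, ?_, ?_⟩
    · unfold veeCard
      rw [hf, Finset.card_image_of_injOn]
      intro a ha b hb hab
      simp only at hab
      rw [Set.inter_eq_left.2 (part_sub hp' a ha), Set.inter_eq_left.2 (part_sub hp' b hb)] at hab
      obtain ⟨x, hx⟩ := cubeSet_nonempty d a
      exact part_unique hp' a ha b hb x hx (hab ▸ hx)
    · intro Q hQ; exact hp hQ
    · exact Set.injOn_id _
    · intro Q hQ
      exact (Set.inter_eq_right.2 (part_sub hp' Q hQ)).symm
    · intro K'' h1 h2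
      exact hdis K'' h1 (by simpa using h2)
    · have : p ⊆ m'.filter fun K' => cubeSet d K' ⊆ cubeSet d K := by
        intro Q hQ
        exact Finset.mem_filter.2 ⟨hp hQ, part_sub hp' Q hQ⟩
      have := Finset.card_le_card this
      omega

/-- The common refinement of two dyadic partitions has at most `|m| + |m'|` pieces. -/
lemma sum_veeCard_le {d : ℕ} {R : CubeIdx d} {m m' : Finset (CubeIdx d)} (hm : PartC d R m)
    (hm' : PartC d R m') : ∑ K ∈ m, veeCard d m' K ≤ m.card + m'.card := by
  obtain ⟨h, hm0⟩ := hm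
  have h1 : ∀ K ∈ m, veeCard d m' K
      ≤ 1 + (m'.filter fun K' => cubeSet d K' ⊆ cubeSet d K).card := by
    intro K hK
    obtain ⟨p, pr, _, h2, _, _, _, _, h3⟩ := vee_struct (part_desc hm0 K hK) hm'
    omega
  refine (Finset.sum_le_sum h1).trans ?_
  rw [Finset.sum_add_distrib]
  simp only [Finset.sum_const, smul_eq_mul, mul_one]
  gcongr
  rw [← Finset.card_biUnion]
  · exact Finset.card_le_card (Finset.biUnion_subset.2 fun K _ => Finset.filter_subset _ _)
  · intro a ha b hb hab
    rw [Function.onFun, Finset.disjoint_left]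
    intro Q h2 h3
    obtain ⟨x, hx⟩ := cubeSet_nonempty d Q
    exact hab (part_unique hm0 a ha b hb x ((Finset.mem_filter.1 h2).2 hx)
      ((Finset.mem_filter.1 h3).2 hx))

/-- A partition of `K` decomposes the indicator of `K`. -/
lemma sum_indC {d : ℕ} {K : CubeIdx d} {p : Finset (CubeIdx d)} (hp : PartC d K p)
    (x : (Fin d → ℝ) × (Fin d → ℝ)) : ∑ Q ∈ p, indC d Q x = indC d K x := by
  obtain ⟨h, hp⟩ := hp
  by_cases hx : pairPt d x.1 x.2 ∈ cubeSet d K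
  · obtain ⟨Q, hQ, hxQ⟩ := part_exists hp _ hx
    rw [Finset.sum_eq_single Q, indC_of_mem hx, indC_of_mem hxQ]
    · intro Q' hQ' hne
      refine indC_of_not_mem fun h => hne ?_
      exact part_unique hp Q' hQ' Q hQ _ h hxQ
    · intro h; exact absurd hQ h
  · rw [indC_of_not_mem hx]
    exact Finset.sum_eq_zero fun Q hQ => indC_of_not_mem fun h => hx (part_sub hp Q hQ h)

/-- On a cube of a partition, a piecewise constant function equals its value on that cube. -/
lemma sum_indC_mul {d : ℕ} {R : CubeIdx d} {m : Finset (CubeIdx d)} (hm : PartC d R m)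
    (a : CubeIdx d → ℝ) {K : CubeIdx d} (hK : K ∈ m) (x : (Fin d → ℝ) × (Fin d → ℝ)) :
    (∑ Q ∈ m, a Q * indC d Q x) * indC d K x = a K * indC d K x := by
  obtain ⟨h, hp⟩ := hm
  by_cases hx : pairPt d x.1 x.2 ∈ cubeSet d K
  · rw [Finset.sum_eq_single K, mul_assoc, indC_of_mem hx, mul_one]
    · intro Q' hQ' hne
      rw [indC_of_not_mem fun h => hne ?_, mul_zero]
      exact part_unique hp Q' hQ' K hK _ h hx
    · intro h; exact absurd hK h
  · rw [indC_of_not_mem hx]; simp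

/-! ### Counting dyadic partitions -/

/-- The finite set of dyadic partitions of `K` of depth at most `h`. -/
def partsF (d : ℕ) : ℕ → CubeIdx d → Finset (Finset (CubeIdx d))
  | 0, K => {{K}}
  | h + 1, K => insert {K} ((Fintype.piFinset
      (fun c : {c // c ∈ childrenC d K} => partsF d h c.1)).image
        (fun g => Finset.univ.biUnion g))

lemma mem_partsF {d : ℕ} : ∀ (h : ℕ) (K : CubeIdx d) (p : Finset (CubeIdx d)),
    p ∈ partsF d h K ↔ IsPartOf d h K p := by
  intro h
  induction h with
  | zero =>
    intro K p
    simp only [partsF, Finset.mem_singleton]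
    constructor
    · rintro rfl; exact IsPartOf.leaf 0 K
    · intro h; cases h; rfl
  | succ h ih =>
    intro K p
    simp only [partsF, Finset.mem_insert, Finset.mem_image, Fintype.mem_piFinset]
    constructor
    · rintro (rfl | ⟨g, hg, rfl⟩)
      · exact IsPartOf.leaf _ K
      · have := IsPartOf.node h K (fun c => if hc : c ∈ childrenC d K then g ⟨c, hc⟩ else ∅) (by
          intro c hc
          rw [dif_pos hc]
          exact (ih _ _).1 (hg ⟨c, hc⟩))
        convert this using 1
        ext Q
        simp only [Finset.mem_biUnion, Finset.mem_univ, true_and, Subtype.exists]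
        constructor
        · rintro ⟨c, hc, hQ⟩; exact ⟨c, hc, by rwa [dif_pos hc]⟩
        · rintro ⟨c, hc, hQ⟩; rw [dif_pos hc] at hQ; exact ⟨c, hc, hQ⟩
    · intro hp
      cases hp with
      | leaf _ _ => exact Or.inl rfl
      | node _ _ f hf =>
        refine Or.inr ⟨fun c => f c.1, fun c => (ih _ _).2 (hf c.1 c.2), ?_⟩
        ext Q
        simp

/-- The generating series of the dyadic partitions satisfies `G ≤ y + G²`, which keeps it below
`2y` for `y ≤ 1/4`. -/
lemma sum_partsF_le {d : ℕ} (hd : 0 < d) {y : ℝ} (hy : 0 ≤ y) (hy' : y ≤ 1/4) :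
    ∀ (h : ℕ) (K : CubeIdx d), ∑ p ∈ partsF d h K, y ^ p.card ≤ 2 * y := by
  intro h
  induction h with
  | zero => intro K; simp [partsF]; linarith
  | succ h ih =>
    intro K
    set P := Fintype.piFinset (fun c : {c // c ∈ childrenC d K} => partsF d h c.1) with hP
    have h1 : ∑ p ∈ P.image (fun g => Finset.univ.biUnion g), y ^ p.card
        ≤ ∑ g ∈ P, y ^ (Finset.univ.biUnion g).card :=
      Finset.sum_image_le_of_nonneg (fun _ _ => by positivity)
    have h2 : ∑ g ∈ P, y ^ (Finset.univ.biUnion g).card = ∑ g ∈ P, ∏ c, y ^ (g c).card := by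
      refine Finset.sum_congr rfl fun g hg => ?_
      rw [Finset.card_biUnion, Finset.prod_pow_eq_pow_sum]
      intro a _ b _ hab
      rw [Function.onFun, Finset.disjoint_left]
      intro Q ha hb
      have hg' := Fintype.mem_piFinset.1 hg
      obtain ⟨x, hx⟩ := cubeSet_nonempty d Q
      exact hab (Subtype.ext (child_unique d K a.1 b.1 a.2 b.2 x
        (part_sub ((mem_partsF _ _ _).1 (hg' a)) Q ha hx)
        (part_sub ((mem_partsF _ _ _).1 (hg' b)) Q hb hx)))
    have h3 : ∑ g ∈ P, ∏ c, y ^ (g c).card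
        = ∏ c : {c // c ∈ childrenC d K}, ∑ p ∈ partsF d h c.1, y ^ p.card :=
      (Finset.prod_univ_sum (fun c : {c // c ∈ childrenC d K} => partsF d h c.1)
        (fun _ p => y ^ p.card)).symm
    have h4 : ∏ c : {c // c ∈ childrenC d K}, ∑ p ∈ partsF d h c.1, y ^ p.card
        ≤ ∏ c : {c // c ∈ childrenC d K}, (2 * y) :=
      Finset.prod_le_prod (fun _ _ => Finset.sum_nonneg fun _ _ => by positivity)
        (fun c _ => ih c.1)
    have h5 : ∏ c : {c // c ∈ childrenC d K}, (2 * y) ≤ y := by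
      rw [Finset.prod_const, Finset.card_univ, Fintype.card_coe]
      calc (2 * y) ^ (childrenC d K).card ≤ (2 * y) ^ 2 :=
            pow_le_pow_of_le_one (by linarith) (by linarith) (children_card d hd K)
        _ ≤ y := by nlinarith
    have h6 : ∑ p ∈ partsF d (h+1) K, y ^ p.card
        ≤ y ^ ({K} : Finset (CubeIdx d)).card
          + ∑ p ∈ P.image (fun g => Finset.univ.biUnion g), y ^ p.card := by
      rw [partsF]
      by_cases hm : ({K} : Finset (CubeIdx d)) ∈ P.image (fun g => Finset.univ.biUnion g)
      · rw [Finset.insert_eq_of_mem hm]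
        have : 0 ≤ y ^ ({K} : Finset (CubeIdx d)).card := by positivity
        linarith
      · rw [Finset.sum_insert hm]
    rw [Finset.card_singleton, pow_one] at h6
    linarith

lemma tsum_part_le {d : ℕ} (hd : 0 < d) {y : ℝ} (hy : 0 ≤ y) (hy' : y ≤ 1/4) (K : CubeIdx d) :
    ∑' p : {p // PartC d K p}, ENNReal.ofReal (y ^ p.1.card) ≤ ENNReal.ofReal (2 * y) := by
  rw [ENNReal.tsum_eq_iSup_sum]
  refine iSup_le fun S => ?_
  choose hh hhp using fun p : {p // PartC d K p} => p.2
  have hsub : S.image Subtype.val ⊆ partsF d (S.sup hh) K := by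
    intro p hp
    obtain ⟨q, hq, rfl⟩ := Finset.mem_image.1 hp
    exact (mem_partsF _ _ _).2 (part_mono (hhp q) _ (Finset.le_sup hq))
  rw [← ENNReal.ofReal_sum_of_nonneg (fun _ _ => by positivity)]
  refine ENNReal.ofReal_le_ofReal ?_
  calc ∑ p ∈ S, y ^ p.1.card = ∑ p ∈ S.image Subtype.val, y ^ p.card := by
        rw [Finset.sum_image (fun a _ b _ h => Subtype.ext h)]
    _ ≤ ∑ p ∈ partsF d (S.sup hh) K, y ^ p.card :=
        Finset.sum_le_sum_of_subset_of_nonneg hsub (fun _ _ _ => by positivity)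
    _ ≤ 2 * y := sum_partsF_le hd hy hy' _ K

/-! ### The pointwise inequalities behind the test statistic -/

/-- The summand of the test statistic at an observed transition, when the two candidates take the
values `u` and `v` there. -/
def psiF (u v : ℝ) : ℝ := (√v - √u) / √(u + v) / √2

/-- The integrand of the two integral terms of the test statistic, for the values `u` and `v`. -/
def phiF (u v : ℝ) : ℝ := 1 / (2 * √2) * (√(u + v) * (√v - √u)) + (u - v) / 2

lemma psiF_antisymm (u v : ℝ) : psiF u v = - psiF v u := by
  unfold psiF; rw [add_comm u v]; ring

lemma phiF_antisymm (u v : ℝ) : phiF u v = - phiF v u := by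
  unfold phiF; rw [add_comm u v]; ring

lemma psiF_sq {u v : ℝ} (hu : 0 ≤ u) (hv : 0 ≤ v) :
    psiF u v ^ 2 = (√v - √u) ^ 2 / (u + v) / 2 := by
  unfold psiF
  rw [div_pow, div_pow, Real.sq_sqrt (add_nonneg hu hv), Real.sq_sqrt (by norm_num)]

lemma psiF_sq_le {u v : ℝ} (hu : 0 ≤ u) (hv : 0 ≤ v) : psiF u v ^ 2 ≤ 1 / 2 := by
  rw [psiF_sq hu hv]
  have : (√v - √u) ^ 2 / (u + v) ≤ 1 := by
    refine div_le_one_of_le₀ ?_ (add_nonneg hu hv)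
    have h1 := Real.sq_sqrt hu
    have h2 := Real.sq_sqrt hv
    have := mul_nonneg (Real.sqrt_nonneg u) (Real.sqrt_nonneg v)
    nlinarith
  linarith

lemma psiF_abs_le {u v : ℝ} (hu : 0 ≤ u) (hv : 0 ≤ v) : |psiF u v| ≤ 1 := by
  have := psiF_sq_le hu hv
  exact abs_le_one_iff_mul_self_le_one.2 (by nlinarith)

/-- Variance bound: `s ψ²` is controlled by the Hellinger losses of both candidates. -/
lemma psiF_var {u v : ℝ} (hu : 0 ≤ u) (hv : 0 ≤ v) (σ : ℝ) :
    σ ^ 2 * psiF u v ^ 2 ≤ 3 * (σ - √u) ^ 2 + 2 * (σ - √v) ^ 2 := by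
  have h1 := Real.sq_sqrt hu
  have h2 := Real.sq_sqrt hv
  have h3 := psiF_sq_le hu hv
  have h4 : u * psiF u v ^ 2 ≤ (√v - √u) ^ 2 / 2 := by
    rw [psiF_sq hu hv]
    rcases eq_or_lt_of_le (add_nonneg hu hv) with h | h
    · rw [← h]; simp; positivity
    · have : u * ((√v - √u) ^ 2 / (u + v) / 2) = (u / (u + v)) * ((√v - √u) ^ 2 / 2) := by
        field_simp
      rw [this]
      have : u / (u + v) ≤ 1 := div_le_one_of_le₀ (by linarith) h.le
      nlinarith [sq_nonneg (√v - √u)]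
  have h5 : σ ^ 2 ≤ 2 * (σ - √u) ^ 2 + 2 * u := by nlinarith [sq_nonneg (σ - 2 * √u)]
  have h6 : σ ^ 2 * psiF u v ^ 2 ≤ (2 * (σ - √u) ^ 2 + 2 * u) * psiF u v ^ 2 := by
    gcongr
  have h7 : (σ - √u) ^ 2 * psiF u v ^ 2 ≤ (σ - √u) ^ 2 * (1 / 2) := by gcongr
  nlinarith [sq_nonneg (σ - √u + (σ - √v))]

/-- In expectation, the test statistic is bounded by a difference of Hellinger losses. -/
lemma test_mean {u v : ℝ} (hu : 0 ≤ u) (hv : 0 ≤ v) {σ : ℝ} (hσ : 0 ≤ σ) :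
    phiF u v + σ ^ 2 * psiF u v
      ≤ (1 + 1 / √2) / 2 * (σ - √u) ^ 2 - (1 - 1 / √2) / 2 * (σ - √v) ^ 2 := by
  have h1 := Real.sq_sqrt hu
  have h2 := Real.sq_sqrt hv
  have ha := Real.sqrt_nonneg u
  have hb := Real.sqrt_nonneg v
  set a := √u
  set b := √v
  have hk : √2 ^ 2 = 2 := Real.sq_sqrt (by norm_num)
  have hk0 : 0 < √2 := by positivity
  rcases eq_or_lt_of_le (add_nonneg hu hv) with h | h
  · have hu0 : u = 0 := by linarith
    have hv0 : v = 0 := by linarith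
    have ha0 : a = 0 := by nlinarith
    have hb0 : b = 0 := by nlinarith
    unfold phiF psiF
    change 1 / (2 * √2) * (√(u + v) * (b - a)) + (u - v) / 2 + σ ^ 2 * ((b - a) / √(u + v) / √2) ≤ _
    rw [ha0, hb0, hu0, hv0]
    simp only [sub_zero, mul_zero, zero_div, add_zero]
    have : (1 + 1 / √2) / 2 * σ ^ 2 - (1 - 1 / √2) / 2 * σ ^ 2 = 1 / √2 * σ ^ 2 := by ring
    rw [this]; positivity
  · -- `r` is the root of the mean density `(u + v) / 2`
    obtain ⟨r, hr⟩ : ∃ r, r = √(u + v) / √2 := ⟨_, rfl⟩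
    have hw : √(u + v) = r * √2 := by rw [hr]; field_simp
    have hr0 : 0 < r := by rw [hr]; have := Real.sqrt_pos.2 h; positivity
    have hr2 : r ^ 2 = (a ^ 2 + b ^ 2) / 2 := by
      rw [hr, div_pow, hk, Real.sq_sqrt h.le, h1, h2]
    have e : phiF u v + σ ^ 2 * psiF u v
        = (σ - a) ^ 2 / 2 - (σ - b) ^ 2 / 2 + (b - a) / r / 2 * (σ - r) ^ 2 := by
      unfold phiF psiF
      change 1 / (2 * √2) * (√(u + v) * (b - a)) + (u - v) / 2
        + σ ^ 2 * ((b - a) / √(u + v) / √2) = _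
      rw [hw, ← h1, ← h2]
      have hk1 : r * √2 * √2 = r * 2 := by rw [mul_assoc, ← sq, hk]
      rw [div_div (b - a), hk1]
      field_simp
      ring
    have hd : (b - a) / r ≤ √2 := by
      rw [div_le_iff₀ hr0]
      have : b ≤ √2 * r := by
        refine le_of_sq_le_sq ?_ (by positivity)
        rw [mul_pow, hk, hr2]; nlinarith
      linarith
    have hr1 : (a + b) / 2 ≤ r := by
      refine le_of_sq_le_sq ?_ hr0.le
      rw [hr2]; nlinarith [sq_nonneg (a - b)]
    have h3 : (σ - r) ^ 2 ≤ ((σ - a) ^ 2 + (σ - b) ^ 2) / 2 := by nlinarith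
    have h4 : (b - a) / r / 2 * (σ - r) ^ 2 ≤ √2 / 2 * (((σ - a) ^ 2 + (σ - b) ^ 2) / 2) := by
      gcongr
    have hk2 : 1 / √2 = √2 / 2 := by
      field_simp; linarith
    rw [e, hk2]
    linarith

lemma inv_sqrt_two_bounds : 0.7 ≤ 1 / √2 ∧ 1 / √2 ≤ 0.70715 := by
  have hk : (1 / √2) ^ 2 = 1 / 2 := by rw [div_pow, Real.sq_sqrt (by norm_num)]; norm_num
  have h0 : 0 < 1 / √2 := by positivity
  constructor <;> nlinarith

/-- Upper bound for the criterion, once the fluctuation has cost the variance term `ψ² / 64`. -/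
lemma crit_upper {u v : ℝ} (hu : 0 ≤ u) (hv : 0 ≤ v) {σ : ℝ} (hσ : 0 ≤ σ) :
    alphaC / 2 * (√u - √v) ^ 2 + phiF u v + σ ^ 2 * (psiF u v + psiF u v ^ 2 / 64)
      ≤ 3 / 2 * (σ - √u) ^ 2 := by
  have h1 := test_mean hu hv hσ
  have h2 := psiF_var hu hv σ
  obtain ⟨k1, k2⟩ := inv_sqrt_two_bounds
  have h3 : (√u - √v) ^ 2 ≤ 3 * (σ - √u) ^ 2 + 3 / 2 * (σ - √v) ^ 2 := by
    nlinarith [sq_nonneg (2 * (σ - √u) + (σ - √v))]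
  unfold alphaC
  set k := 1 / √2
  have h4 : (1 - k) / 2 / 2 * (√u - √v) ^ 2
      ≤ (1 - k) / 2 / 2 * (3 * (σ - √u) ^ 2 + 3 / 2 * (σ - √v) ^ 2) := by
    gcongr; linarith
  nlinarith [sq_nonneg (σ - √u), sq_nonneg (σ - √v)]

/-- Lower bound for the criterion: the reverse test, with its variance term, dominates the loss
of the competitor `v`. -/
lemma crit_lower {u v : ℝ} (hu : 0 ≤ u) (hv : 0 ≤ v) {σ : ℝ} (hσ : 0 ≤ σ) :
    phiF u v + σ ^ 2 * (psiF u v + psiF u v ^ 2 / 64)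
      ≤ (σ - √u) ^ 2 - 1 / 10 * (σ - √v) ^ 2 := by
  have h1 := test_mean hu hv hσ
  have h2 := psiF_var hu hv σ
  obtain ⟨k1, k2⟩ := inv_sqrt_two_bounds
  set k := 1 / √2
  nlinarith [sq_nonneg (σ - √u), sq_nonneg (σ - √v)]

/-! ### Sums attached to a path and a cube -/

/-- `IsDens d s`: `s` is a measurable transition density on `ℝ^d`. -/
structure IsDens (d : ℕ) (s : (Fin d → ℝ) → (Fin d → ℝ) → ℝ) : Prop where
  meas : Measurable (Function.uncurry s)
  nonneg : ∀ x y, 0 ≤ s x y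
  int_one : ∀ x, ∫ y, s x y = 1

/-- Number of observed transitions in the cube `K` along the path `x`. -/
def cN (d n : ℕ) (x : ℕ → Fin d → ℝ) (K : CubeIdx d) : ℝ :=
  ∑ i ∈ Finset.range n, indC d K (x i, x (i + 1))

/-- `∑ i, ∫ 1_K(x_i, y) dy`. -/
def cD (d n : ℕ) (x : ℕ → Fin d → ℝ) (K : CubeIdx d) : ℝ :=
  ∑ i ∈ Finset.range n, ∫ y, indC d K (x i, y)

/-- `∑ i, ∫ 1_K(x_i, y) s(x_i, y) dy`, the compensator of `cN`. -/
def cE (d n : ℕ) (s : (Fin d → ℝ) → (Fin d → ℝ) → ℝ) (x : ℕ → Fin d → ℝ) (K : CubeIdx d) : ℝ :=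
  ∑ i ∈ Finset.range n, ∫ y, indC d K (x i, y) * s (x i) y

/-- `∑ i, ∫ 1_K(x_i, y) √s(x_i, y) dy`. -/
def cR (d n : ℕ) (s : (Fin d → ℝ) → (Fin d → ℝ) → ℝ) (x : ℕ → Fin d → ℝ) (K : CubeIdx d) : ℝ :=
  ∑ i ∈ Finset.range n, ∫ y, indC d K (x i, y) * √(s (x i) y)

/-- `∑ i, ∫ 1_K(x_i, y) (√s(x_i, y) - √a)² dy` in expanded form. -/
def cH (d n : ℕ) (s : (Fin d → ℝ) → (Fin d → ℝ) → ℝ) (x : ℕ → Fin d → ℝ) (K : CubeIdx d)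
    (a : ℝ) : ℝ :=
  cE d n s x K - 2 * √a * cR d n s x K + a * cD d n x K

lemma measurable_pairPt (d : ℕ) :
    Measurable (fun p : (Fin d → ℝ) × (Fin d → ℝ) => pairPt d p.1 p.2) := by
  refine measurable_pi_lambda _ fun i => ?_
  unfold pairPt
  by_cases h : (i : ℕ) < d
  · simp only [h, dite_true]
    exact (measurable_pi_apply _).comp measurable_fst
  · simp only [h, dite_false]
    exact (measurable_pi_apply _).comp measurable_snd

lemma measurableSet_dyadicI (j l : ℕ) : MeasurableSet (dyadicI j l) := by
  unfold dyadicI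
  split_ifs
  · exact measurableSet_Icc
  · exact measurableSet_Ico

lemma measurableSet_cubeSet (d : ℕ) (K : CubeIdx d) : MeasurableSet (cubeSet d K) := by
  have : cubeSet d K = ⋂ i, {x | x i ∈ dyadicI K.1 (K.2 i)} := by
    ext x; simp [cubeSet]
  rw [this]
  exact MeasurableSet.iInter fun i => (measurable_pi_apply i) (measurableSet_dyadicI _ _)

lemma measurable_indC (d : ℕ) (K : CubeIdx d) : Measurable (indC d K) :=
  (measurable_const.indicator (measurableSet_cubeSet d K)).comp (measurable_pairPt d)

lemma dyadicI_bdd (j l : ℕ) : dyadicI j l ⊆ Set.Icc 0 ((l:ℝ) + 1) := by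
  have h1 : (1:ℝ) ≤ 2 ^ j := one_le_pow₀ (by norm_num)
  have h2 : (0:ℝ) ≤ (l:ℝ) / 2 ^ j := by positivity
  unfold dyadicI
  split_ifs
  · rintro x ⟨a, b⟩
    exact ⟨h2.trans a, b.trans (by linarith [(Nat.cast_nonneg l : (0:ℝ) ≤ l)])⟩
  · rintro x ⟨a, b⟩
    exact ⟨h2.trans a, b.le.trans (div_le_self (by positivity) h1)⟩

lemma integrable_indC (d : ℕ) (K : CubeIdx d) (x : Fin d → ℝ) :
    Integrable (fun y => indC d K (x, y)) := by
  set B : Set (Fin d → ℝ) := Set.Icc 0 (fun i => (K.2 ⟨i + d, by omega⟩ : ℝ) + 1)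
  have hB : Integrable (B.indicator (fun _ => (1:ℝ))) := by
    rw [integrable_indicator_iff measurableSet_Icc]
    exact continuous_const.continuousOn.integrableOn_compact isCompact_Icc
  refine hB.mono ((measurable_indC d K).comp measurable_prodMk_left).aestronglyMeasurable ?_
  refine Filter.Eventually.of_forall fun y => ?_
  rw [Real.norm_of_nonneg (indC_nonneg _ _ _)]
  by_cases h : pairPt d x y ∈ cubeSet d K
  · have : y ∈ B := by
      rw [Set.mem_Icc, Pi.le_def, Pi.le_def]
      have : ∀ i : Fin d, y i ∈ Set.Icc (0:ℝ) ((K.2 ⟨i + d, by omega⟩ : ℝ) + 1) := by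
        intro i
        have := dyadicI_bdd _ _ (h ⟨i + d, by omega⟩)
        simpa [pairPt] using this
      exact ⟨fun i => (this i).1, fun i => (this i).2⟩
    rw [Set.indicator_of_mem this]
    simpa using indC_le_one _ _ _
  · rw [indC_of_not_mem h]; exact norm_nonneg _

section
variable {d n : ℕ} {s : (Fin d → ℝ) → (Fin d → ℝ) → ℝ}

lemma IsDens.meas_sec (hs : IsDens d s) (x : Fin d → ℝ) : Measurable (s x) :=
  hs.meas.comp measurable_prodMk_left

lemma IsDens.integrable (hs : IsDens d s) (x : Fin d → ℝ) : Integrable (s x) := by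
  by_contra h
  have := hs.int_one x
  rw [integral_undef h] at this
  norm_num at this

lemma integrable_indC_mul (hs : IsDens d s) (K : CubeIdx d) (x : Fin d → ℝ) :
    Integrable (fun y => indC d K (x, y) * s x y) := by
  refine (hs.integrable x).mono
    (((measurable_indC d K).comp measurable_prodMk_left).mul (hs.meas_sec x)).aestronglyMeasurable
    (Filter.Eventually.of_forall fun y => ?_)
  rw [norm_mul, Real.norm_of_nonneg (indC_nonneg _ _ _)]
  exact mul_le_of_le_one_left (norm_nonneg _) (indC_le_one _ _ _)

lemma integrable_indC_mul_sqrt (hs : IsDens d s) (K : CubeIdx d) (x : Fin d → ℝ) :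
    Integrable (fun y => indC d K (x, y) * √(s x y)) := by
  refine ((integrable_indC d K x).add (integrable_indC_mul hs K x)).mono
    (((measurable_indC d K).comp measurable_prodMk_left).mul
      (hs.meas_sec x).sqrt).aestronglyMeasurable
    (Filter.Eventually.of_forall fun y => ?_)
  have h0 := indC_nonneg d K (x, y)
  have h1 : √(s x y) ≤ 1 + s x y := by
    have := Real.sq_sqrt (hs.nonneg x y)
    nlinarith [sq_nonneg (√(s x y) - 1), Real.sqrt_nonneg (s x y)]
  have h2 := hs.nonneg x y
  simp only [Pi.add_apply]
  rw [Real.norm_of_nonneg (by positivity), Real.norm_of_nonneg (by positivity)]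
  nlinarith

lemma integral_quad (hs : IsDens d s) (K : CubeIdx d) (x : Fin d → ℝ) (c0 c1 c2 : ℝ) :
    ∫ y, indC d K (x, y) * (c0 + c1 * s x y + c2 * √(s x y))
      = c0 * (∫ y, indC d K (x, y)) + c1 * (∫ y, indC d K (x, y) * s x y)
        + c2 * ∫ y, indC d K (x, y) * √(s x y) := by
  rw [← integral_const_mul, ← integral_const_mul, ← integral_const_mul, ← integral_add,
    ← integral_add]
  · congr 1; funext y; ring
  · exact ((integrable_indC d K x).const_mul _).add ((integrable_indC_mul hs K x).const_mul _)
  · exact (integrable_indC_mul_sqrt hs K x).const_mul _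
  · exact (integrable_indC d K x).const_mul _
  · exact (integrable_indC_mul hs K x).const_mul _

lemma sum_integral_quad (hs : IsDens d s) (K : CubeIdx d) (x : ℕ → Fin d → ℝ) (c0 c1 c2 : ℝ) :
    ∑ i ∈ Finset.range n, ∫ y, indC d K (x i, y) * (c0 + c1 * s (x i) y + c2 * √(s (x i) y))
      = c0 * cD d n x K + c1 * cE d n s x K + c2 * cR d n s x K := by
  simp_rw [integral_quad hs]
  rw [Finset.sum_add_distrib, Finset.sum_add_distrib, ← Finset.mul_sum, ← Finset.mul_sum,
    ← Finset.mul_sum]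
  rfl

/-- A pointwise inequality between quadratic expressions in `√s` passes to the integrals. -/
lemma quad_nonneg (hs : IsDens d s) (K : CubeIdx d) (x : ℕ → Fin d → ℝ) {c0 c1 c2 : ℝ}
    (h : ∀ σ : ℝ, 0 ≤ σ → 0 ≤ c0 + c1 * σ ^ 2 + c2 * σ) :
    0 ≤ c0 * cD d n x K + c1 * cE d n s x K + c2 * cR d n s x K := by
  rw [← sum_integral_quad hs]
  refine Finset.sum_nonneg fun i _ => integral_nonneg fun y => ?_
  refine mul_nonneg (indC_nonneg _ _ _) ?_
  have := h (√(s (x i) y)) (Real.sqrt_nonneg _)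
  rwa [Real.sq_sqrt (hs.nonneg _ _)] at this

lemma cD_nonneg (K : CubeIdx d) (x : ℕ → Fin d → ℝ) : 0 ≤ cD d n x K :=
  Finset.sum_nonneg fun _ _ => integral_nonneg fun _ => indC_nonneg _ _ _

lemma cN_nonneg (K : CubeIdx d) (x : ℕ → Fin d → ℝ) : 0 ≤ cN d n x K :=
  Finset.sum_nonneg fun _ _ => indC_nonneg _ _ _

lemma cN_le (K : CubeIdx d) (x : ℕ → Fin d → ℝ) : cN d n x K ≤ n := by
  unfold cN
  calc _ ≤ ∑ i ∈ Finset.range n, (1:ℝ) := Finset.sum_le_sum fun _ _ => indC_le_one _ _ _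
    _ = n := by simp

lemma cE_nonneg (hs : IsDens d s) (K : CubeIdx d) (x : ℕ → Fin d → ℝ) : 0 ≤ cE d n s x K :=
  Finset.sum_nonneg fun _ _ => integral_nonneg fun _ => mul_nonneg (indC_nonneg _ _ _)
    (hs.nonneg _ _)

lemma cE_le (hs : IsDens d s) (K : CubeIdx d) (x : ℕ → Fin d → ℝ) : cE d n s x K ≤ n := by
  unfold cE
  calc _ ≤ ∑ i ∈ Finset.range n, (1:ℝ) := by
        refine Finset.sum_le_sum fun i _ => ?_
        rw [← hs.int_one (x i)]
        exact integral_mono (integrable_indC_mul hs K _) (hs.integrable _) fun y =>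
          mul_le_of_le_one_left (hs.nonneg _ _) (indC_le_one _ _ _)
    _ = n := by simp

lemma cR_nonneg (K : CubeIdx d) (x : ℕ → Fin d → ℝ) : 0 ≤ cR d n s x K :=
  Finset.sum_nonneg fun _ _ => integral_nonneg fun _ => mul_nonneg (indC_nonneg _ _ _)
    (Real.sqrt_nonneg _)

/-- A cube which is null for the integrals `∫ dy` is null for `∫ s dy`. -/
lemma cE_cR_eq_zero (K : CubeIdx d) (x : ℕ → Fin d → ℝ) (h : cD d n x K = 0) :
    cE d n s x K = 0 ∧ cR d n s x K = 0 := by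
  have h1 : ∀ i ∈ Finset.range n, (fun y => indC d K (x i, y)) =ᵐ[volume] 0 := by
    intro i hi
    have := (Finset.sum_eq_zero_iff_of_nonneg fun i _ =>
      integral_nonneg fun y => indC_nonneg d K (x i, y)).1 h i hi
    exact (integral_eq_zero_iff_of_nonneg (fun y => indC_nonneg d K (x i, y))
      (integrable_indC d K (x i))).1 this
  constructor
  · refine Finset.sum_eq_zero fun i hi => ?_
    rw [integral_eq_zero_of_ae]
    filter_upwards [h1 i hi] with y hy
    simp only [Pi.zero_apply] at hy ⊢
    rw [hy, zero_mul]
  · refine Finset.sum_eq_zero fun i hi => ?_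
    rw [integral_eq_zero_of_ae]
    filter_upwards [h1 i hi] with y hy
    simp only [Pi.zero_apply] at hy ⊢
    rw [hy, zero_mul]

lemma cH_nonneg (hs : IsDens d s) (K : CubeIdx d) (x : ℕ → Fin d → ℝ) {a : ℝ} (ha : 0 ≤ a) :
    0 ≤ cH d n s x K a := by
  have := quad_nonneg (n := n) hs K x (c0 := a) (c1 := 1) (c2 := -2 * √a) (fun σ _ => by
    nlinarith [sq_nonneg (σ - √a), Real.sq_sqrt ha])
  unfold cH; linarith

lemma cN_sum {K : CubeIdx d} {p : Finset (CubeIdx d)} (hp : PartC d K p) (x : ℕ → Fin d → ℝ) :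
    cN d n x K = ∑ Q ∈ p, cN d n x Q := by
  unfold cN
  rw [Finset.sum_comm]
  simp_rw [sum_indC hp]

lemma cD_sum {K : CubeIdx d} {p : Finset (CubeIdx d)} (hp : PartC d K p) (x : ℕ → Fin d → ℝ) :
    cD d n x K = ∑ Q ∈ p, cD d n x Q := by
  unfold cD
  rw [Finset.sum_comm]
  refine Finset.sum_congr rfl fun i _ => ?_
  rw [← integral_finsetSum _ fun Q _ => integrable_indC d Q (x i)]
  simp_rw [sum_indC hp]

lemma cE_sum (hs : IsDens d s) {K : CubeIdx d} {p : Finset (CubeIdx d)} (hp : PartC d K p)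
    (x : ℕ → Fin d → ℝ) : cE d n s x K = ∑ Q ∈ p, cE d n s x Q := by
  unfold cE
  rw [Finset.sum_comm]
  refine Finset.sum_congr rfl fun i _ => ?_
  rw [← integral_finsetSum _ fun Q _ => integrable_indC_mul hs Q (x i)]
  simp_rw [← Finset.sum_mul, sum_indC hp]

lemma cR_sum (hs : IsDens d s) {K : CubeIdx d} {p : Finset (CubeIdx d)} (hp : PartC d K p)
    (x : ℕ → Fin d → ℝ) : cR d n s x K = ∑ Q ∈ p, cR d n s x Q := by
  unfold cR
  rw [Finset.sum_comm]
  refine Finset.sum_congr rfl fun i _ => ?_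
  rw [← integral_finsetSum _ fun Q _ => integrable_indC_mul_sqrt hs Q (x i)]
  simp_rw [← Finset.sum_mul, sum_indC hp]

lemma cH_sum (hs : IsDens d s) {K : CubeIdx d} {p : Finset (CubeIdx d)} (hp : PartC d K p)
    (x : ℕ → Fin d → ℝ) (a : ℝ) : cH d n s x K a = ∑ Q ∈ p, cH d n s x Q a := by
  unfold cH
  rw [cE_sum hs hp, cR_sum hs hp, cD_sum hp, Finset.mul_sum, Finset.mul_sum,
    ← Finset.sum_sub_distrib, ← Finset.sum_add_distrib]

end

/-! ### The statistics on cubes -/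

section
variable {d n : ℕ} {s : (Fin d → ℝ) → (Fin d → ℝ) → ℝ} {Ω : Type*}
  {X : ℕ → Ω → (Fin d → ℝ)} {ω : Ω}

lemma hellSq_const (Q : CubeIdx d) (u v : ℝ) :
    hellSq d n X ω (fun p => u * indC d Q p) (fun p => v * indC d Q p)
      = (1 / n) * ((√u - √v) ^ 2 / 2 * cD d n (fun i => X i ω) Q) := by
  have h : ∀ p, (√(u * indC d Q p) - √(v * indC d Q p)) ^ 2
      = (√u - √v) ^ 2 * indC d Q p := by
    intro p
    rcases indC_zero_or_one d Q p with h | h <;> rw [h] <;> simp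
  unfold hellSq cD
  simp_rw [h, integral_const_mul, ← Finset.mul_sum]
  ring

lemma Tstat_const (Q : CubeIdx d) (u v : ℝ) :
    Tstat d n X ω (fun p => u * indC d Q p) (fun p => v * indC d Q p)
      = (1 / n) * (phiF u v * cD d n (fun i => X i ω) Q
          + psiF u v * cN d n (fun i => X i ω) Q) := by
  have h1 : ∀ p, √(u * indC d Q p + v * indC d Q p) * (√(v * indC d Q p) - √(u * indC d Q p))
      = √(u + v) * (√v - √u) * indC d Q p := by
    intro p
    rcases indC_zero_or_one d Q p with h | h <;> rw [h] <;> simp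
  have h2 : ∀ p, (√(v * indC d Q p) - √(u * indC d Q p)) / √(u * indC d Q p + v * indC d Q p)
      = (√v - √u) / √(u + v) * indC d Q p := by
    intro p
    rcases indC_zero_or_one d Q p with h | h <;> rw [h] <;> simp
  have h3 : ∀ p, u * indC d Q p - v * indC d Q p = (u - v) * indC d Q p := by
    intro p; ring
  unfold Tstat cD cN phiF psiF
  simp_rw [h1, h2, h3, integral_const_mul, ← Finset.mul_sum]
  ring

lemma hist_eq (m : Finset (CubeIdx d)) :
    histEst d n X m ω = fun p => ∑ K ∈ m,
      (cN d n (fun i => X i ω) K / cD d n (fun i => X i ω) K) * indC d K p := rfl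

lemma mem_unitSq_iff (p : (Fin d → ℝ) × (Fin d → ℝ)) :
    p ∈ unitSq d ↔ pairPt d p.1 p.2 ∈ cubeSet d (rootC d) := by
  have h0 : dyadicI 0 0 = Set.Icc (0:ℝ) 1 := by unfold dyadicI; simp
  simp only [unitSq, Set.mem_prod, Set.mem_Icc, Pi.le_def, cubeSet, rootC, Set.mem_ofPred_eq, h0,
    Pi.zero_apply, Pi.one_apply]
  constructor
  · rintro ⟨⟨a, b⟩, c, e⟩ i
    unfold pairPt
    split_ifs
    · exact ⟨a _, b _⟩
    · exact ⟨c _, e _⟩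
  · intro h
    have h1 : ∀ i : Fin d, 0 ≤ p.1 i ∧ p.1 i ≤ 1 := by
      intro i
      have := h ⟨i, by omega⟩
      simpa [pairPt] using this
    have h2 : ∀ i : Fin d, 0 ≤ p.2 i ∧ p.2 i ≤ 1 := by
      intro i
      have := h ⟨i + d, by omega⟩
      simpa [pairPt] using this
    exact ⟨⟨fun i => (h1 i).1, fun i => (h1 i).2⟩, fun i => (h2 i).1, fun i => (h2 i).2⟩

lemma hellSq_pc (hs : IsDens d s) {m : Finset (CubeIdx d)} (hm : PartC d (rootC d) m)
    (a : CubeIdx d → ℝ) (ha : ∀ K ∈ m, 0 ≤ a K) :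
    hellSq d n X ω (sIndA d s) (fun p => ∑ K ∈ m, a K * indC d K p)
      = (1 / n) * (∑ K ∈ m, cH d n s (fun i => X i ω) K (a K) / 2) := by
  have h : ∀ x y, (√(sIndA d s (x, y)) - √(∑ K ∈ m, a K * indC d K (x, y))) ^ 2
      = ∑ K ∈ m, indC d K (x, y) * (a K + 1 * s x y + (-2 * √(a K)) * √(s x y)) := by
    intro x y
    have hz := sum_indC hm (x, y)
    obtain ⟨h, hm⟩ := hm
    by_cases hx : pairPt d x y ∈ cubeSet d (rootC d)
    · obtain ⟨K, hK, hxK⟩ := part_exists hm _ hx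
      have hne : ∀ Q ∈ m, Q ≠ K → indC d Q (x, y) = 0 := fun Q hQ hne =>
        indC_of_not_mem fun h => hne (part_unique hm Q hQ K hK _ h hxK)
      rw [Finset.sum_eq_single_of_mem K hK fun Q hQ hn => by rw [hne Q hQ hn, mul_zero],
        Finset.sum_eq_single_of_mem K hK fun Q hQ hn => by rw [hne Q hQ hn, zero_mul],
        indC_of_mem hxK]
      have hmem : (x, y) ∈ unitSq d := (mem_unitSq_iff _).2 hx
      rw [sIndA, Set.indicator_of_mem hmem]
      simp only [mul_one, one_mul]
      rw [sub_sq, Real.sq_sqrt (hs.nonneg _ _), Real.sq_sqrt (ha K hK)]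
      ring
    · have hne : ∀ Q ∈ m, indC d Q (x, y) = 0 := fun Q hQ =>
        indC_of_not_mem fun h => hx (part_sub hm Q hQ h)
      rw [Finset.sum_eq_zero fun Q hQ => by rw [hne Q hQ, mul_zero],
        Finset.sum_eq_zero fun Q hQ => by rw [hne Q hQ, zero_mul]]
      have hmem : (x, y) ∉ unitSq d := fun h => hx ((mem_unitSq_iff _).1 h)
      rw [sIndA, Set.indicator_of_notMem hmem]
      simp
  unfold hellSq
  simp_rw [h]
  have h2 : ∀ i, ∫ y, ∑ K ∈ m, indC d K (X i ω, y)
        * (a K + 1 * s (X i ω) y + (-2 * √(a K)) * √(s (X i ω) y))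
      = ∑ K ∈ m, ∫ y, indC d K (X i ω, y)
        * (a K + 1 * s (X i ω) y + (-2 * √(a K)) * √(s (X i ω) y)) := by
    intro i
    refine integral_finsetSum _ fun K _ => ?_
    have := (((integrable_indC d K (X i ω)).const_mul (a K)).add
      ((integrable_indC_mul hs K (X i ω)).const_mul 1)).add
      ((integrable_indC_mul_sqrt hs K (X i ω)).const_mul (-2 * √(a K)))
    refine this.congr (Filter.Eventually.of_forall fun y => ?_)
    simp only [Pi.add_apply]; ring
  simp_rw [h2]
  rw [Finset.sum_comm]
  simp_rw [sum_integral_quad hs _ (fun i => X i ω)]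
  rw [Finset.mul_sum, Finset.mul_sum]
  refine Finset.sum_congr rfl fun K _ => ?_
  unfold cH; ring

end

/-! ### The selection criterion for a fixed path -/

section
variable {d n : ℕ} {s : (Fin d → ℝ) → (Fin d → ℝ) → ℝ}

/-- Height of the histogram estimator on the cube `K`. -/
def hgt (d n : ℕ) (x : ℕ → Fin d → ℝ) (K : CubeIdx d) : ℝ := cN d n x K / cD d n x K

lemma hgt_nonneg (x : ℕ → Fin d → ℝ) (K : CubeIdx d) : 0 ≤ hgt d n x K :=
  div_nonneg (cN_nonneg _ _) (cD_nonneg _ _)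

/-- Uniform control, with deviation `Ξ`, of the fluctuations of the counts over all dyadic
partitions of the cube `K`. -/
def DevC (d n : ℕ) (s : (Fin d → ℝ) → (Fin d → ℝ) → ℝ) (x : ℕ → Fin d → ℝ) (K : CubeIdx d)
    (Ξ : ℝ) : Prop :=
  ∀ p, PartC d K p → ∀ ψ : CubeIdx d → ℝ, (∀ Q ∈ p, |ψ Q| ≤ 1) →
    ∑ Q ∈ p, ψ Q * cN d n x Q
      ≤ ∑ Q ∈ p, (ψ Q + ψ Q ^ 2 / 64) * cE d n s x Q + 1 + 192 * log n * p.card + 64 * Ξ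

lemma indC_congr {Q Q' : CubeIdx d} (h : cubeSet d Q = cubeSet d Q') : indC d Q = indC d Q' := by
  funext p; unfold indC; rw [h]

lemma indC_inter {Q K K' : CubeIdx d} (h : cubeSet d Q = cubeSet d K ∩ cubeSet d K')
    (p : (Fin d → ℝ) × (Fin d → ℝ)) : indC d K p * indC d K' p = indC d Q p := by
  by_cases h1 : pairPt d p.1 p.2 ∈ cubeSet d K
  · by_cases h2 : pairPt d p.1 p.2 ∈ cubeSet d K'
    · rw [indC_of_mem h1, indC_of_mem h2, indC_of_mem (h.symm.subset ⟨h1, h2⟩), mul_one]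
    · rw [indC_of_not_mem h2, indC_of_not_mem fun hq => h2 (h.subset hq).2, mul_zero]
  · rw [indC_of_not_mem h1, indC_of_not_mem fun hq => h1 (h.subset hq).1, zero_mul]

lemma indC_disj {K K' : CubeIdx d} (h : Disjoint (cubeSet d K) (cubeSet d K'))
    (p : (Fin d → ℝ) × (Fin d → ℝ)) : indC d K p * indC d K' p = 0 := by
  by_cases hp : pairPt d p.1 p.2 ∈ cubeSet d K
  · rw [indC_of_not_mem (Set.disjoint_left.1 h hp), mul_zero]
  · rw [indC_of_not_mem hp, zero_mul]

lemma cH_congr {Q Q' : CubeIdx d} (h : cubeSet d Q = cubeSet d Q') (x : ℕ → Fin d → ℝ) (a : ℝ) :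
    cH d n s x Q a = cH d n s x Q' a := by
  unfold cH cE cR cD; rw [indC_congr h]

/-- The loss `cH` on the intersection of two cubes (zero if the intersection is not a cube). The
choice of a code for the intersection is immaterial by `cH_congr`. -/
def cW (d n : ℕ) (s : (Fin d → ℝ) → (Fin d → ℝ) → ℝ) (x : ℕ → Fin d → ℝ) (K K' : CubeIdx d)
    (a : ℝ) : ℝ :=
  if h : ∃ Q, cubeSet d Q = cubeSet d K ∩ cubeSet d K' then cH d n s x h.choose a else 0

lemma cW_eq {Q K K' : CubeIdx d} (h : cubeSet d Q = cubeSet d K ∩ cubeSet d K')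
    (x : ℕ → Fin d → ℝ) (a : ℝ) : cW d n s x K K' a = cH d n s x Q a := by
  have h' : ∃ Q, cubeSet d Q = cubeSet d K ∩ cubeSet d K' := ⟨Q, h⟩
  unfold cW
  rw [dif_pos h']
  exact cH_congr (h'.choose_spec.trans h.symm) x a

lemma cW_zero {K K' : CubeIdx d} (h : Disjoint (cubeSet d K) (cubeSet d K'))
    (x : ℕ → Fin d → ℝ) (a : ℝ) : cW d n s x K K' a = 0 := by
  unfold cW
  rw [dif_neg]
  rintro ⟨Q, hQ⟩
  obtain ⟨y, hy⟩ := cubeSet_nonempty d Q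
  rw [hQ, Set.disjoint_iff_inter_eq_empty.1 h] at hy
  exact hy

lemma cW_comm (K K' : CubeIdx d) (x : ℕ → Fin d → ℝ) (a : ℝ) :
    cW d n s x K K' a = cW d n s x K' K a := by
  by_cases h : ∃ Q, cubeSet d Q = cubeSet d K ∩ cubeSet d K'
  · obtain ⟨Q, hQ⟩ := h
    rw [cW_eq hQ, cW_eq (hQ.trans (Set.inter_comm _ _))]
  · unfold cW
    rw [dif_neg h, dif_neg (by rwa [Set.inter_comm] at h)]

/-- Reindexing a sum over `m'` by the pieces of `m' ∨ K`. -/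
lemma sum_vee {K : CubeIdx d} {m' p : Finset (CubeIdx d)} {pr : CubeIdx d → CubeIdx d}
    (h1 : ∀ Q ∈ p, pr Q ∈ m') (h2 : Set.InjOn pr p)
    (h3 : ∀ K' ∈ m', K' ∉ p.image pr → Disjoint (cubeSet d K) (cubeSet d K'))
    (f : CubeIdx d → ℝ) (hf : ∀ K', Disjoint (cubeSet d K) (cubeSet d K') → f K' = 0) :
    ∑ K' ∈ m', f K' = ∑ Q ∈ p, f (pr Q) := by
  rw [← Finset.sum_image (f := f) h2]
  refine (Finset.sum_subset (Finset.image_subset_iff.2 h1) fun K' hK' hn => ?_).symm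
  exact hf K' (h3 K' hK' hn)

lemma cW_sum (hs : IsDens d s) {R K : CubeIdx d} (hK : DescC d R K) {m' : Finset (CubeIdx d)}
    (hm' : PartC d R m') (x : ℕ → Fin d → ℝ) (a : ℝ) :
    ∑ K' ∈ m', cW d n s x K K' a = cH d n s x K a := by
  obtain ⟨p, pr, hp, -, h1, h2, h4, h3, -⟩ := vee_struct hK hm'
  rw [sum_vee h1 h2 h3 _ fun K' h => cW_zero h x a, cH_sum hs hp]
  exact Finset.sum_congr rfl fun Q hQ => cW_eq (h4 Q hQ) x a

variable {Ω : Type*} {X : ℕ → Ω → (Fin d → ℝ)} {ω : Ω}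

lemma restr2_hist_left {m : Finset (CubeIdx d)} (hm : PartC d (rootC d) m) {K : CubeIdx d}
    (hK : K ∈ m) (K' : CubeIdx d) :
    restr2 d (histEst d n X m ω) K K'
      = fun p => hgt d n (fun i => X i ω) K * (indC d K p * indC d K' p) := by
  funext p
  unfold restr2
  rw [hist_eq]
  have := sum_indC_mul hm
    (fun K => cN d n (fun i => X i ω) K / cD d n (fun i => X i ω) K) hK p
  simp only at this ⊢
  rw [this]; unfold hgt; ring

lemma restr2_comm (f : (Fin d → ℝ) × (Fin d → ℝ) → ℝ) (K K' : CubeIdx d) :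
    restr2 d f K K' = restr2 d f K' K := by
  funext p; unfold restr2; ring

lemma restr2_inter {m m' : Finset (CubeIdx d)} (hm : PartC d (rootC d) m)
    (hm' : PartC d (rootC d) m') {K K' Q : CubeIdx d} (hK : K ∈ m) (hK' : K' ∈ m')
    (h : cubeSet d Q = cubeSet d K ∩ cubeSet d K') :
    restr2 d (histEst d n X m ω) K K' = (fun p => hgt d n (fun i => X i ω) K * indC d Q p) ∧
    restr2 d (histEst d n X m' ω) K K' = (fun p => hgt d n (fun i => X i ω) K' * indC d Q p) := by
  constructor
  · rw [restr2_hist_left hm hK]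
    simp_rw [indC_inter h]
  · rw [restr2_comm, restr2_hist_left hm' hK']
    simp_rw [indC_inter (h.trans (Set.inter_comm _ _))]

lemma restr2_disj (f : (Fin d → ℝ) × (Fin d → ℝ) → ℝ) {K K' : CubeIdx d}
    (h : Disjoint (cubeSet d K) (cubeSet d K')) :
    restr2 d f K K' = fun p => 0 * indC d K p := by
  funext p; unfold restr2; rw [mul_assoc, indC_disj h]; ring

lemma hellSq_disj (f g : (Fin d → ℝ) × (Fin d → ℝ) → ℝ) {K K' : CubeIdx d}
    (h : Disjoint (cubeSet d K) (cubeSet d K')) :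
    hellSq d n X ω (restr2 d f K K') (restr2 d g K K') = 0 := by
  rw [restr2_disj f h, restr2_disj g h, hellSq_const]; simp

lemma Tstat_disj (f g : (Fin d → ℝ) × (Fin d → ℝ) → ℝ) {K K' : CubeIdx d}
    (h : Disjoint (cubeSet d K) (cubeSet d K')) :
    Tstat d n X ω (restr2 d f K K') (restr2 d g K K') = 0 := by
  rw [restr2_disj f h, restr2_disj g h, Tstat_const]; simp [phiF, psiF]

lemma alphaC_nonneg : 0 ≤ alphaC := by
  unfold alphaC; linarith [inv_sqrt_two_bounds.2]

lemma hellSq_nonneg (f g : (Fin d → ℝ) × (Fin d → ℝ) → ℝ) : 0 ≤ hellSq d n X ω f g :=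
  mul_nonneg (by positivity) (Finset.sum_nonneg fun _ _ => integral_nonneg fun _ => sq_nonneg _)

lemma DevC.nonneg {x : ℕ → Fin d → ℝ} {K : CubeIdx d} {Ξ : ℝ} (h : DevC d n s x K Ξ)
    {p : Finset (CubeIdx d)} (hp : PartC d K p) : 0 ≤ 1 + 192 * log n * p.card + 64 * Ξ := by
  have := h p hp (fun _ => 0) (by simp)
  simpa using this

/-- The local criterion at the cube `K` is bounded, uniformly over competitors, by the loss of
the histogram on `K`. -/
lemma local_upper (hs : IsDens d s) (hn : 0 < n) {m m' : Finset (CubeIdx d)}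
    (hm : PartC d (rootC d) m) (hm' : PartC d (rootC d) m') {K : CubeIdx d} (hK : K ∈ m)
    {Ξ L : ℝ} (hL : 192 ≤ L) (hD : DevC d n s (fun i => X i ω) K Ξ) :
    (∑ K' ∈ m', (alphaC * hellSq d n X ω (restr2 d (histEst d n X m ω) K K')
                (restr2 d (histEst d n X m' ω) K K')
            + Tstat d n X ω (restr2 d (histEst d n X m ω) K K')
                (restr2 d (histEst d n X m' ω) K K')))
        - penC L n (veeCard d m' K)
      ≤ (1 / n) * (3 / 2 * cH d n s (fun i => X i ω) K (hgt d n (fun i => X i ω) K)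
          + 1 + 64 * Ξ) := by
  set x : ℕ → Fin d → ℝ := fun i => X i ω with hx
  obtain ⟨p, pr, hp, hc, h1, h2, h4, h3, -⟩ := vee_struct (part_desc hm.choose_spec K hK) hm'
  rw [sum_vee h1 h2 h3 _ fun K' h => by rw [hellSq_disj _ _ h, Tstat_disj _ _ h]; simp]
  set u := hgt d n x K with hu
  have hu0 : 0 ≤ u := hgt_nonneg x K
  have e1 : ∀ Q ∈ p, alphaC * hellSq d n X ω (restr2 d (histEst d n X m ω) K (pr Q))
                (restr2 d (histEst d n X m' ω) K (pr Q))
            + Tstat d n X ω (restr2 d (histEst d n X m ω) K (pr Q))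
                (restr2 d (histEst d n X m' ω) K (pr Q))
      = (1 / n) * ((alphaC / 2 * (√u - √(hgt d n x (pr Q))) ^ 2 + phiF u (hgt d n x (pr Q)))
          * cD d n x Q + psiF u (hgt d n x (pr Q)) * cN d n x Q) := by
    intro Q hQ
    obtain ⟨r1, r2⟩ := restr2_inter (n := n) (X := X) (ω := ω) hm hm' hK (h1 Q hQ) (h4 Q hQ)
    rw [r1, r2, hellSq_const, Tstat_const]
    ring
  rw [Finset.sum_congr rfl e1, ← Finset.mul_sum, Finset.sum_add_distrib]
  have hd := hD p hp (fun Q => psiF u (hgt d n x (pr Q)))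
    fun Q _ => psiF_abs_le hu0 (hgt_nonneg x _)
  have hq : ∀ Q ∈ p, (alphaC / 2 * (√u - √(hgt d n x (pr Q))) ^ 2 + phiF u (hgt d n x (pr Q)))
          * cD d n x Q + (psiF u (hgt d n x (pr Q)) + psiF u (hgt d n x (pr Q)) ^ 2 / 64)
            * cE d n s x Q ≤ 3 / 2 * cH d n s x Q u := by
    intro Q _
    set v := hgt d n x (pr Q) with hv
    have hv0 : 0 ≤ v := hgt_nonneg x (pr Q)
    have := quad_nonneg (n := n) hs Q x
      (c0 := 3 / 2 * u - (alphaC / 2 * (√u - √v) ^ 2 + phiF u v))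
      (c1 := 3 / 2 - (psiF u v + psiF u v ^ 2 / 64)) (c2 := -3 * √u) (fun σ hσ => by
        have := crit_upper hu0 hv0 hσ
        nlinarith [Real.sq_sqrt hu0])
    unfold cH
    linarith
  have hsum := Finset.sum_le_sum hq
  rw [Finset.sum_add_distrib, ← Finset.mul_sum, ← cH_sum hs hp] at hsum
  have hlog : 0 ≤ log n := Real.log_natCast_nonneg n
  have hpen : penC L n (veeCard d m' K) = (1 / n) * (L * log n * p.card) := by
    unfold penC; rw [hc]; ring
  rw [hpen, ← mul_sub]
  have hL' : 192 * log n * p.card ≤ L * log n * p.card := by gcongr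
  gcongr
  linarith

/-- Reverse inequality: testing the histogram on `m''` against the histogram on `m` around a cube
`M` of `m` detects the loss of the former. -/
lemma local_lower (hs : IsDens d s) (hn : 0 < n) {m m'' : Finset (CubeIdx d)}
    (hm : PartC d (rootC d) m) (hm'' : PartC d (rootC d) m'') {M : CubeIdx d} (hM : M ∈ m)
    {Ξ : ℝ} (hD : DevC d n s (fun i => X i ω) M Ξ) :
    (1 / n) * (1 / 10 * (∑ K ∈ m'', cW d n s (fun i => X i ω) K M (hgt d n (fun i => X i ω) K))
        - cH d n s (fun i => X i ω) M (hgt d n (fun i => X i ω) M)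
        - (1 + 192 * log n * veeCard d m'' M + 64 * Ξ))
      ≤ ∑ K ∈ m'', Tstat d n X ω (restr2 d (histEst d n X m'' ω) K M)
                (restr2 d (histEst d n X m ω) K M) := by
  set x : ℕ → Fin d → ℝ := fun i => X i ω with hx
  obtain ⟨p, pr, hp, hc, h1, h2, h4, h3, -⟩ := vee_struct (part_desc hm.choose_spec M hM) hm''
  rw [sum_vee h1 h2 h3 (fun K => Tstat d n X ω (restr2 d (histEst d n X m'' ω) K M)
                (restr2 d (histEst d n X m ω) K M)) fun K' h => Tstat_disj _ _ h.symm,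
    sum_vee h1 h2 h3 (fun K => cW d n s x K M (hgt d n x K)) fun K' h => cW_zero h.symm _ _]
  set u := hgt d n x M with hu
  have hu0 : 0 ≤ u := hgt_nonneg x M
  have h4' : ∀ Q ∈ p, cubeSet d Q = cubeSet d (pr Q) ∩ cubeSet d M := fun Q hQ =>
    (h4 Q hQ).trans (Set.inter_comm _ _)
  have e1 : ∀ Q ∈ p, Tstat d n X ω (restr2 d (histEst d n X m'' ω) (pr Q) M)
                (restr2 d (histEst d n X m ω) (pr Q) M)
      = (1 / n) * -(phiF u (hgt d n x (pr Q)) * cD d n x Q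
          + psiF u (hgt d n x (pr Q)) * cN d n x Q) := by
    intro Q hQ
    obtain ⟨r1, r2⟩ := restr2_inter (n := n) (X := X) (ω := ω) hm'' hm (h1 Q hQ) hM (h4' Q hQ)
    rw [r1, r2, Tstat_const, phiF_antisymm, psiF_antisymm]
    ring
  rw [Finset.sum_congr rfl e1, ← Finset.mul_sum, Finset.sum_neg_distrib, Finset.sum_add_distrib,
    Finset.sum_congr rfl fun Q hQ => cW_eq (h4' Q hQ) x _]
  have hd := hD p hp (fun Q => psiF u (hgt d n x (pr Q)))
    fun Q _ => psiF_abs_le hu0 (hgt_nonneg x _)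
  have hq : ∀ Q ∈ p, phiF u (hgt d n x (pr Q))
          * cD d n x Q + (psiF u (hgt d n x (pr Q)) + psiF u (hgt d n x (pr Q)) ^ 2 / 64)
            * cE d n s x Q
        ≤ cH d n s x Q u - 1 / 10 * cH d n s x Q (hgt d n x (pr Q)) := by
    intro Q _
    set v := hgt d n x (pr Q) with hv
    have hv0 : 0 ≤ v := hgt_nonneg x (pr Q)
    have := quad_nonneg (n := n) hs Q x
      (c0 := u - 1 / 10 * v - phiF u v)
      (c1 := 1 - 1 / 10 - (psiF u v + psiF u v ^ 2 / 64)) (c2 := -2 * √u + 1 / 5 * √v)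
      (fun σ hσ => by
        have := crit_lower hu0 hv0 hσ
        nlinarith [Real.sq_sqrt hu0, Real.sq_sqrt hv0])
    unfold cH
    linarith
  have hsum := Finset.sum_le_sum hq
  rw [Finset.sum_add_distrib, Finset.sum_sub_distrib, ← Finset.mul_sum, ← cH_sum hs hp] at hsum
  rw [← hc]
  gcongr
  linarith

end

section
variable {d n : ℕ} {s : (Fin d → ℝ) → (Fin d → ℝ) → ℝ} {Ω : Type*}
  {X : ℕ → Ω → (Fin d → ℝ)} {ω : Ω}

lemma hellSq_hist (hs : IsDens d s) {m : Finset (CubeIdx d)} (hm : PartC d (rootC d) m) :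
    hellSq d n X ω (sIndA d s) (histEst d n X m ω)
      = (1 / n) * ∑ K ∈ m, cH d n s (fun i => X i ω) K (hgt d n (fun i => X i ω) K) / 2 :=
  hellSq_pc hs hm _ fun K _ => hgt_nonneg (fun i => X i ω) K

/-- The criterion at `m` is bounded by the loss of the histogram on `m` and the penalty. -/
lemma gammaSel_le (hs : IsDens d s) (hn : 0 < n) {L : ℝ} (hL : 192 ≤ L) {ℓ : ℕ∞}
    {Ξ : CubeIdx d → ℝ} (hD : ∀ K, DevC d n s (fun i => X i ω) K (Ξ K))
    {m : Finset (CubeIdx d)} (hm : m ∈ MpartE d ℓ) :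
    gammaSel d n X L ℓ ω m ≤ 3 * hellSq d n X ω (sIndA d s) (histEst d n X m ω)
      + (1 / n) * (m.card + 64 * ∑ K ∈ m, Ξ K) + 2 * penC L n m.card := by
  have : Nonempty (MpartE d ℓ) := ⟨⟨_, partE_root d ℓ⟩⟩
  have hm0 := partE_part hm
  unfold gammaSel
  gcongr
  calc _ ≤ ∑ K ∈ m, (1 / (n:ℝ)) * (3 / 2 * cH d n s (fun i => X i ω) K
              (hgt d n (fun i => X i ω) K) + 1 + 64 * Ξ K) :=
        Finset.sum_le_sum fun K hK => ciSup_le fun m' =>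
          local_upper hs hn hm0 (partE_part m'.2) hK hL (hD K)
    _ = _ := by
        rw [hellSq_hist hs hm0, ← Finset.mul_sum, Finset.sum_add_distrib, Finset.sum_add_distrib,
          ← Finset.mul_sum, ← Finset.mul_sum, ← Finset.sum_div]
        simp only [Finset.sum_const, nsmul_eq_mul, mul_one]
        ring

lemma le_gammaSel (hs : IsDens d s) (hn : 0 < n) {L : ℝ} (hL : 192 ≤ L) {ℓ : ℕ∞}
    {Ξ : CubeIdx d → ℝ} (hD : ∀ K, DevC d n s (fun i => X i ω) K (Ξ K))
    {m m'' : Finset (CubeIdx d)} (hm : m ∈ MpartE d ℓ) (hm'' : m'' ∈ MpartE d ℓ) :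
    1 / 5 * hellSq d n X ω (sIndA d s) (histEst d n X m'' ω)
      - 2 * hellSq d n X ω (sIndA d s) (histEst d n X m ω) - 2 * penC L n m.card
      - (1 / n) * (m.card + 64 * ∑ K ∈ m, Ξ K) ≤ gammaSel d n X L ℓ ω m'' := by
  have hm0 := partE_part hm
  have hm1 := partE_part hm''
  have hsup : (∑ K ∈ m'', ((∑ M ∈ m,
        Tstat d n X ω (restr2 d (histEst d n X m'' ω) K M) (restr2 d (histEst d n X m ω) K M))
          - penC L n (veeCard d m K))) + 2 * penC L n m''.card ≤ gammaSel d n X L ℓ ω m'' := by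
    unfold gammaSel
    gcongr with K hK
    refine le_trans ?_ (le_ciSup ⟨(1 / n) * (3 / 2 * cH d n s (fun i => X i ω) K
      (hgt d n (fun i => X i ω) K) + 1 + 64 * Ξ K), ?_⟩ (⟨m, hm⟩ : MpartE d ℓ))
    · gcongr with M hM
      have := mul_nonneg alphaC_nonneg (hellSq_nonneg (n := n) (X := X) (ω := ω)
        (restr2 d (histEst d n X m'' ω) K M) (restr2 d (histEst d n X m ω) K M))
      linarith
    · rintro _ ⟨m', rfl⟩
      exact local_upper hs hn hm1 (partE_part m'.2) hK hL (hD K)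
  refine le_trans ?_ hsup
  rw [Finset.sum_sub_distrib, Finset.sum_comm]
  have h1 := Finset.sum_le_sum fun M hM => local_lower (X := X) (ω := ω) hs hn hm0 hm1 hM (hD M)
  have h2 : ∑ M ∈ m, ∑ K ∈ m'', cW d n s (fun i => X i ω) K M (hgt d n (fun i => X i ω) K)
      = ∑ K ∈ m'', cH d n s (fun i => X i ω) K (hgt d n (fun i => X i ω) K) := by
    rw [Finset.sum_comm]
    exact Finset.sum_congr rfl fun K hK => cW_sum hs (part_desc hm1.choose_spec K hK) hm0 _ _
  rw [← Finset.mul_sum, Finset.sum_sub_distrib, Finset.sum_sub_distrib, ← Finset.mul_sum, h2,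
    Finset.sum_add_distrib, Finset.sum_add_distrib, ← Finset.mul_sum, ← Finset.mul_sum] at h1
  simp only [Finset.sum_const, nsmul_eq_mul, mul_one] at h1
  have hlog : 0 ≤ log n := Real.log_natCast_nonneg n
  have hn' : (0:ℝ) < n := by exact_mod_cast hn
  have v1 : (∑ K ∈ m'', (veeCard d m K : ℝ)) ≤ m''.card + m.card := by
    exact_mod_cast sum_veeCard_le hm1 hm0
  have v2 : (∑ K ∈ m, (veeCard d m'' K : ℝ)) ≤ m.card + m''.card := by
    exact_mod_cast sum_veeCard_le hm0 hm1
  have p1 : ∑ K ∈ m'', penC L n (veeCard d m K)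
      = L * log n / n * ∑ K ∈ m'', (veeCard d m K : ℝ) := by
    rw [Finset.mul_sum]
    exact Finset.sum_congr rfl fun K _ => by unfold penC; ring
  have p2 : ∑ K ∈ m'', penC L n (veeCard d m K) ≤ penC L n m''.card + penC L n m.card := by
    rw [p1]
    calc _ ≤ L * log n / n * (m''.card + m.card) := by gcongr
      _ = _ := by unfold penC; ring
  have p3 : (1 / (n:ℝ)) * (192 * log n * ∑ K ∈ m, (veeCard d m'' K : ℝ))
      ≤ penC L n m''.card + penC L n m.card := by
    calc _ ≤ (1 / (n:ℝ)) * (L * log n * (m.card + m''.card)) := by gcongr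
      _ = _ := by unfold penC; ring
  rw [hellSq_hist hs hm0, hellSq_hist hs hm1, ← Finset.sum_div, ← Finset.sum_div]
  set a := ∑ K ∈ m'', cH d n s (fun i => X i ω) K (hgt d n (fun i => X i ω) K)
  set b := ∑ K ∈ m, cH d n s (fun i => X i ω) K (hgt d n (fun i => X i ω) K)
  have e : (1 / (n:ℝ)) * (1 / 10 * a - b - (m.card + 192 * log n * (∑ K ∈ m, (veeCard d m'' K : ℝ))
        + 64 * ∑ K ∈ m, Ξ K))
      = 1 / 5 * ((1 / n) * (a / 2)) - 2 * ((1 / n) * (b / 2))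
        - (1 / n) * (m.card + 64 * ∑ K ∈ m, Ξ K)
        - (1 / (n:ℝ)) * (192 * log n * ∑ K ∈ m, (veeCard d m'' K : ℝ)) := by ring
  rw [e] at h1
  linarith

/-- Deterministic oracle inequality for the selected partition. -/
lemma selection_bound (hs : IsDens d s) (hn : 0 < n) {L : ℝ} (hL : 192 ≤ L) {ℓ : ℕ∞}
    {Ξ : CubeIdx d → ℝ} (hD : ∀ K, DevC d n s (fun i => X i ω) K (Ξ K))
    {m m'' : Finset (CubeIdx d)} (hm : m ∈ MpartE d ℓ) (hm'' : m'' ∈ MpartE d ℓ)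
    (hsel : gammaSel d n X L ℓ ω m''
      ≤ (⨅ m : MpartE d ℓ, gammaSel d n X L ℓ ω (m : Finset (CubeIdx d))) + 1 / n) :
    1 / 5 * hellSq d n X ω (sIndA d s) (histEst d n X m'' ω)
      ≤ 5 * hellSq d n X ω (sIndA d s) (histEst d n X m ω) + 4 * penC L n m.card
        + (1 / n) * (2 * m.card + 1 + 128 * ∑ K ∈ m, Ξ K) := by
  have hbdd : BddBelow (Set.range fun m : MpartE d ℓ =>
      gammaSel d n X L ℓ ω (m : Finset (CubeIdx d))) := by
    refine ⟨- 2 * hellSq d n X ω (sIndA d s) (histEst d n X m ω) - 2 * penC L n m.card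
      - (1 / n) * (m.card + 64 * ∑ K ∈ m, Ξ K), ?_⟩
    rintro _ ⟨m', rfl⟩
    refine le_trans ?_ (le_gammaSel hs hn hL hD hm m'.2)
    have := hellSq_nonneg (n := n) (X := X) (ω := ω) (sIndA d s) (histEst d n X m' ω)
    linarith
  have h1 := ciInf_le hbdd ⟨m, hm⟩
  have h2 := gammaSel_le hs hn hL hD hm
  have h3 := le_gammaSel hs hn hL hD hm hm''
  simp only at h1
  have e : (1 / (n:ℝ)) * (2 * m.card + 1 + 128 * ∑ K ∈ m, Ξ K)
    = (1 / n) * (m.card + 64 * ∑ K ∈ m, Ξ K) + (1 / n) * (m.card + 64 * ∑ K ∈ m, Ξ K) + 1 / n := by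
    ring
  rw [e]
  linarith

end

/-! ### An exponential supermartingale for the transition counts -/

section
variable {d n : ℕ} {s : (Fin d → ℝ) → (Fin d → ℝ) → ℝ}

lemma measurable_cN (K : CubeIdx d) : Measurable fun x : ℕ → Fin d → ℝ => cN d n x K := by
  unfold cN
  exact Finset.measurable_sum _ fun i _ =>
    (measurable_indC d K).comp ((measurable_pi_apply i).prodMk (measurable_pi_apply (i + 1)))

lemma measurable_int_indC (K : CubeIdx d) :
    Measurable fun x : Fin d → ℝ => ∫ y, indC d K (x, y) :=
  have : Measurable (Function.uncurry fun x y => indC d K (x, y)) := measurable_indC d K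
  this.stronglyMeasurable.integral_prod_right.measurable

lemma measurable_int_indC_mul (hs : IsDens d s) (K : CubeIdx d) :
    Measurable fun x : Fin d → ℝ => ∫ y, indC d K (x, y) * s x y := by
  have : Measurable (Function.uncurry fun x y => indC d K (x, y) * s x y) :=
    (measurable_indC d K).mul hs.meas
  exact this.stronglyMeasurable.integral_prod_right.measurable

lemma measurable_int_indC_mul_sqrt (hs : IsDens d s) (K : CubeIdx d) :
    Measurable fun x : Fin d → ℝ => ∫ y, indC d K (x, y) * √(s x y) := by
  have : Measurable (Function.uncurry fun x y => indC d K (x, y) * √(s x y)) :=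
    (measurable_indC d K).mul hs.meas.sqrt
  exact this.stronglyMeasurable.integral_prod_right.measurable

lemma measurable_cD (K : CubeIdx d) : Measurable fun x : ℕ → Fin d → ℝ => cD d n x K := by
  unfold cD
  exact Finset.measurable_sum _ fun i _ => (measurable_int_indC K).comp (measurable_pi_apply i)

lemma measurable_cE (hs : IsDens d s) (K : CubeIdx d) :
    Measurable fun x : ℕ → Fin d → ℝ => cE d n s x K := by
  unfold cE
  exact Finset.measurable_sum _ fun i _ =>
    (measurable_int_indC_mul hs K).comp (measurable_pi_apply i)

lemma measurable_cR (hs : IsDens d s) (K : CubeIdx d) :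
    Measurable fun x : ℕ → Fin d → ℝ => cR d n s x K := by
  unfold cR
  exact Finset.measurable_sum _ fun i _ =>
    (measurable_int_indC_mul_sqrt hs K).comp (measurable_pi_apply i)

/-- The exponent `∑_Q (θ_Q N_Q - (exp θ_Q - 1) E_Q)` of the supermartingale. -/
def eXp (d n : ℕ) (s : (Fin d → ℝ) → (Fin d → ℝ) → ℝ) (x : ℕ → Fin d → ℝ)
    (p : Finset (CubeIdx d)) (θ : CubeIdx d → ℝ) : ℝ :=
  ∑ Q ∈ p, (θ Q * cN d n x Q - (exp (θ Q) - 1) * cE d n s x Q)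

lemma measurable_eXp (hs : IsDens d s) (p : Finset (CubeIdx d)) (θ : CubeIdx d → ℝ) :
    Measurable fun x : ℕ → Fin d → ℝ => eXp d n s x p θ := by
  unfold eXp
  exact Finset.measurable_sum _ fun Q _ =>
    ((measurable_cN Q).const_mul _).sub ((measurable_cE hs Q).const_mul _)

lemma eXp_le (hs : IsDens d s) (x : ℕ → Fin d → ℝ) (p : Finset (CubeIdx d)) (θ : CubeIdx d → ℝ) :
    |eXp d n s x p θ| ≤ ∑ Q ∈ p, (|θ Q| * n + |exp (θ Q) - 1| * n) := by
  unfold eXp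
  refine (Finset.abs_sum_le_sum_abs _ _).trans (Finset.sum_le_sum fun Q _ => ?_)
  refine (abs_sub _ _).trans ?_
  rw [abs_mul, abs_mul, abs_of_nonneg (cN_nonneg _ _), abs_of_nonneg (cE_nonneg hs _ _)]
  have := cN_le (n := n) Q x
  have := cE_le (n := n) hs Q x
  gcongr

/-- First-coordinate part of the indicator of a cube. -/
def indL (d : ℕ) (Q : CubeIdx d) (x : Fin d → ℝ) : ℝ :=
  ({x | ∀ i : Fin d, x i ∈ dyadicI Q.1 (Q.2 ⟨i, by omega⟩)} : Set (Fin d → ℝ)).indicator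
    (fun _ => (1:ℝ)) x

/-- Second-coordinate part of the indicator of a cube. -/
def indR (d : ℕ) (Q : CubeIdx d) (y : Fin d → ℝ) : ℝ :=
  ({x | ∀ i : Fin d, x i ∈ dyadicI Q.1 (Q.2 ⟨i + d, by omega⟩)} : Set (Fin d → ℝ)).indicator
    (fun _ => (1:ℝ)) y

lemma measurable_indL (Q : CubeIdx d) : Measurable (indL d Q) := by
  refine measurable_const.indicator ?_
  simp only [Set.ofPred_forall]
  exact MeasurableSet.iInter fun i => (measurable_pi_apply i) (measurableSet_dyadicI _ _)

lemma measurable_indR (Q : CubeIdx d) : Measurable (indR d Q) := by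
  refine measurable_const.indicator ?_
  simp only [Set.ofPred_forall]
  exact MeasurableSet.iInter fun i => (measurable_pi_apply i) (measurableSet_dyadicI _ _)

lemma abs_indL_le (Q : CubeIdx d) (x : Fin d → ℝ) : |indL d Q x| ≤ 1 := by
  unfold indL Set.indicator; split_ifs <;> simp

lemma abs_indR_le (Q : CubeIdx d) (x : Fin d → ℝ) : |indR d Q x| ≤ 1 := by
  unfold indR Set.indicator; split_ifs <;> simp

lemma indC_eq_mul (Q : CubeIdx d) (x y : Fin d → ℝ) : indC d Q (x, y) = indL d Q x * indR d Q y := by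
  have key : pairPt d x y ∈ cubeSet d Q ↔
      (∀ i : Fin d, x i ∈ dyadicI Q.1 (Q.2 ⟨i, by omega⟩)) ∧
      (∀ i : Fin d, y i ∈ dyadicI Q.1 (Q.2 ⟨i + d, by omega⟩)) := by
    constructor
    · intro h
      refine ⟨fun i => ?_, fun i => ?_⟩
      · simpa [pairPt] using h ⟨i, by omega⟩
      · simpa [pairPt] using h ⟨i + d, by omega⟩
    · rintro ⟨h1, h2⟩ i
      by_cases hi : (i : ℕ) < d
      · simpa [pairPt, hi] using h1 ⟨i, hi⟩
      · have := h2 ⟨i - d, by omega⟩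
        have e : (⟨(i:ℕ) - d + d, by omega⟩ : Fin (2 * d)) = i := Fin.ext (by simp; omega)
        simp only [e] at this
        simpa [pairPt, hi] using this
  unfold indC indL indR Set.indicator
  simp only [Set.mem_ofPred_eq, key]
  by_cases h1 : ∀ i : Fin d, x i ∈ dyadicI Q.1 (Q.2 ⟨i, by omega⟩) <;>
  by_cases h2 : ∀ i : Fin d, y i ∈ dyadicI Q.1 (Q.2 ⟨i + d, by omega⟩) <;> simp [h1, h2]

lemma exp_sum_indC {K : CubeIdx d} {p : Finset (CubeIdx d)} (hp : PartC d K p)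
    (θ : CubeIdx d → ℝ) (z : (Fin d → ℝ) × (Fin d → ℝ)) :
    exp (∑ Q ∈ p, θ Q * indC d Q z) = 1 + ∑ Q ∈ p, (exp (θ Q) - 1) * indC d Q z := by
  obtain ⟨h, hm⟩ := hp
  by_cases hx : pairPt d z.1 z.2 ∈ cubeSet d K
  · obtain ⟨Q, hQ, hxQ⟩ := part_exists hm _ hx
    have hne : ∀ Q' ∈ p, Q' ≠ Q → indC d Q' z = 0 := fun Q' hQ' hne =>
      indC_of_not_mem fun h => hne (part_unique hm Q' hQ' Q hQ _ h hxQ)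
    rw [Finset.sum_eq_single_of_mem Q hQ fun Q' hQ' hn => by rw [hne Q' hQ' hn, mul_zero],
      Finset.sum_eq_single_of_mem Q hQ fun Q' hQ' hn => by rw [hne Q' hQ' hn, mul_zero],
      indC_of_mem hxQ]
    simp
  · have hne : ∀ Q ∈ p, indC d Q z = 0 := fun Q hQ =>
      indC_of_not_mem fun h => hx (part_sub hm Q hQ h)
    rw [Finset.sum_eq_zero fun Q hQ => by rw [hne Q hQ, mul_zero],
      Finset.sum_eq_zero fun Q hQ => by rw [hne Q hQ, mul_zero]]
    simp

end

/-- The σ-algebra generated by `X 0, …, X i`. -/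
@[reducible] def pastS {d : ℕ} {Ω : Type*} (X : ℕ → Ω → (Fin d → ℝ)) (i : ℕ) : MeasurableSpace Ω :=
  ⨆ k ∈ Finset.range (i + 1), MeasurableSpace.comap (X k) inferInstance

lemma measurable_stopped {d : ℕ} {Ω : Type*} (X : ℕ → Ω → (Fin d → ℝ)) (i : ℕ) :
    Measurable[pastS X i] fun ω (j : ℕ) => X (min j i) ω := by
  refine @measurable_pi_lambda _ _ _ (pastS X i) _ _ fun j => ?_
  refine Measurable.mono (comap_measurable (X (min j i))) ?_ le_rfl
  exact le_iSup₂_of_le (min j i) (Finset.mem_range.2 (by omega)) le_rfl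

section
variable {d n : ℕ} {s : (Fin d → ℝ) → (Fin d → ℝ) → ℝ} {Ω : Type*} [mΩ : MeasurableSpace Ω]
  {P : Measure Ω} {X : ℕ → Ω → (Fin d → ℝ)}

/-- `X 0, …, X n` is a Markov chain with transition density `s`. -/
def IsMarkovD (P : Measure Ω) (n : ℕ) (X : ℕ → Ω → (Fin d → ℝ))
    (s : (Fin d → ℝ) → (Fin d → ℝ) → ℝ) : Prop :=
  ∀ i, i < n → ∀ g : (Fin d → ℝ) → ℝ, Measurable g → (∃ c, ∀ x, |g x| ≤ c) →
    P[(fun ω => g (X (i + 1) ω)) | pastS X i] =ᵐ[P] fun ω => ∫ y, g y * s (X i ω) y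

lemma pastS_le (hX : ∀ i, Measurable (X i)) (i : ℕ) : pastS X i ≤ mΩ :=
  iSup₂_le fun k _ => (hX k).comap_le

lemma integrable_of_bdd [IsFiniteMeasure P] {f : Ω → ℝ} (hf : Measurable f) {c : ℝ}
    (hc : ∀ ω, |f ω| ≤ c) : Integrable f P :=
  Integrable.of_bound hf.aestronglyMeasurable c (Filter.Eventually.of_forall hc)

lemma chain_mul [IsProbabilityMeasure P] (hX : ∀ i, Measurable (X i)) (hM : IsMarkovD P n X s)
    {i : ℕ} (hi : i < n) {F : (ℕ → Fin d → ℝ) → ℝ} (hF : Measurable F) {c : ℝ}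
    (hc : ∀ x, |F x| ≤ c) {g : (Fin d → ℝ) → ℝ} (hg : Measurable g) {c' : ℝ}
    (hg' : ∀ x, |g x| ≤ c') :
    ∫ ω, F (fun j => X (min j i) ω) * g (X (i + 1) ω) ∂P
      = ∫ ω, F (fun j => X (min j i) ω) * (∫ y, g y * s (X i ω) y) ∂P := by
  have hle := pastS_le hX i
  have hFm : Measurable[pastS X i] fun ω => F (fun j => X (min j i) ω) :=
    hF.comp (measurable_stopped X i)
  have hgm : Measurable fun ω => g (X (i + 1) ω) := hg.comp (hX _)
  have hint : Integrable (fun ω => F (fun j => X (min j i) ω) * g (X (i + 1) ω)) P := by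
    refine integrable_of_bdd ((hFm.mono hle le_rfl).mul hgm) (c := c * c') fun ω => ?_
    rw [abs_mul]
    exact mul_le_mul (hc _) (hg' _) (abs_nonneg _) ((abs_nonneg _).trans (hc (fun _ => 0)))
  rw [← integral_condExp hle]
  refine integral_congr_ae ?_
  have h1 := condExp_mul_of_stronglyMeasurable_left (μ := P) (m := pastS X i)
    (f := fun ω => F (fun j => X (min j i) ω)) (g := fun ω => g (X (i + 1) ω))
    hFm.stronglyMeasurable hint (integrable_of_bdd hgm fun ω => hg' _)
  filter_upwards [h1, hM i hi g hg ⟨c', hg'⟩] with ω h1 h2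
  simp only [Pi.mul_apply] at h1
  rw [← h2, ← h1]
  rfl

lemma eXp_congr {k : ℕ} {x x' : ℕ → Fin d → ℝ} (h : ∀ j ≤ k, x j = x' j)
    (p : Finset (CubeIdx d)) (θ : CubeIdx d → ℝ) : eXp d k s x p θ = eXp d k s x' p θ := by
  unfold eXp cN cE
  refine Finset.sum_congr rfl fun Q _ => ?_
  congr 2
  · refine Finset.sum_congr rfl fun i hi => ?_
    have := Finset.mem_range.1 hi
    rw [h i (by omega), h (i + 1) (by omega)]
  · refine Finset.sum_congr rfl fun i hi => ?_
    have := Finset.mem_range.1 hi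
    rw [h i (by omega)]

/-- The cubes of `p` being disjoint, at most one term of `∑ θ_Q 1_Q` is active at each transition,
so the conditional exponential moment of a step is
`1 + ∑ (exp θ_Q - 1) E[1_Q | past] ≤ exp (∑ (exp θ_Q - 1) E[1_Q | past])`. -/
lemma exp_supermartingale [IsProbabilityMeasure P] (hs : IsDens d s) (hX : ∀ i, Measurable (X i))
    (hM : IsMarkovD P n X s) {K : CubeIdx d} {p : Finset (CubeIdx d)} (hp : PartC d K p)
    (θ : CubeIdx d → ℝ) :
    ∀ k ≤ n, ∫ ω, exp (eXp d k s (fun i => X i ω) p θ) ∂P ≤ 1 := by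
  intro k
  induction k with
  | zero => intro _; simp [eXp, cN, cE]
  | succ k ih =>
    intro hk
    refine le_trans ?_ (ih (by omega))
    set e : CubeIdx d → (Fin d → ℝ) → ℝ := fun Q x => ∫ y, indC d Q (x, y) * s x y with he
    have em : ∀ Q, Measurable (e Q) := fun Q => measurable_int_indC_mul hs Q
    have e0 : ∀ Q x, |e Q x| ≤ 1 := by
      intro Q x
      rw [abs_of_nonneg (integral_nonneg fun y => mul_nonneg (indC_nonneg _ _ _) (hs.nonneg _ _)),
        ← hs.int_one x]
      exact integral_mono (integrable_indC_mul hs Q _) (hs.integrable _) fun y =>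
          mul_le_of_le_one_left (hs.nonneg _ _) (indC_le_one _ _ _)
    -- `F` is the predictable part of the `(k+1)`-st step
    set F : (ℕ → Fin d → ℝ) → ℝ := fun x =>
      exp (eXp d k s x p θ - ∑ Q ∈ p, (exp (θ Q) - 1) * e Q (x k)) with hF
    have hFm : Measurable F := ((measurable_eXp hs p θ).sub (Finset.measurable_sum _ fun Q _ =>
      ((em Q).comp (measurable_pi_apply k)).const_mul _)).exp
    set B := exp (∑ Q ∈ p, (|θ Q| * k + |exp (θ Q) - 1| * k) + ∑ Q ∈ p, |exp (θ Q) - 1|) with hB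
    have hFb : ∀ x, |F x| ≤ B := by
      intro x
      rw [abs_of_pos (exp_pos _)]
      refine exp_le_exp.2 ?_
      have h1 := (abs_le.1 (eXp_le (n := k) hs x p θ)).2
      have h2 : -∑ Q ∈ p, (exp (θ Q) - 1) * e Q (x k) ≤ ∑ Q ∈ p, |exp (θ Q) - 1| := by
        refine (neg_le_abs _).trans ((Finset.abs_sum_le_sum_abs _ _).trans
          (Finset.sum_le_sum fun Q _ => ?_))
        rw [abs_mul]
        exact mul_le_of_le_one_right (abs_nonneg _) (e0 _ _)
      linarith
    have hstep : ∀ ω, exp (eXp d (k + 1) s (fun i => X i ω) p θ)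
        = F (fun j => X (min j k) ω) + ∑ Q ∈ p, (exp (θ Q) - 1) *
          ((F (fun j => X (min j k) ω) * indL d Q (X (min k k) ω)) * indR d Q (X (k + 1) ω)) := by
      intro ω
      have h1 : eXp d (k + 1) s (fun i => X i ω) p θ
          = (eXp d k s (fun i => X i ω) p θ - ∑ Q ∈ p, (exp (θ Q) - 1) * e Q (X k ω))
            + ∑ Q ∈ p, θ Q * indC d Q (X k ω, X (k + 1) ω) := by
        unfold eXp cN cE
        rw [← Finset.sum_sub_distrib, ← Finset.sum_add_distrib]
        refine Finset.sum_congr rfl fun Q _ => ?_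
        rw [Finset.sum_range_succ, Finset.sum_range_succ]
        simp only [he]
        ring
      have h2 : F (fun j => X (min j k) ω)
          = exp (eXp d k s (fun i => X i ω) p θ - ∑ Q ∈ p, (exp (θ Q) - 1) * e Q (X k ω)) := by
        simp only [hF, min_self]
        rw [eXp_congr (x := fun j => X (min j k) ω) (x' := fun i => X i ω)
          (fun j hj => by simp [hj])]
      rw [h1, exp_add, exp_sum_indC hp, ← h2, mul_add, mul_one, Finset.mul_sum]
      congr 1
      refine Finset.sum_congr rfl fun Q _ => ?_
      rw [indC_eq_mul, min_self]
      ring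
    have hstopm : Measurable fun ω (j : ℕ) => X (min j k) ω :=
      (measurable_stopped X k).mono (pastS_le hX k) le_rfl
    have hFi : Integrable (fun ω => F (fun j => X (min j k) ω)) P :=
      integrable_of_bdd (hFm.comp hstopm) fun ω => hFb _
    have hGm : ∀ Q, Measurable fun x : ℕ → Fin d → ℝ => F x * indL d Q (x k) := fun Q =>
      hFm.mul ((measurable_indL Q).comp (measurable_pi_apply k))
    have hGb : ∀ Q x, |F x * indL d Q (x k)| ≤ B := by
      intro Q x
      rw [abs_mul]
      exact (mul_le_of_le_one_right (abs_nonneg _) (abs_indL_le _ _)).trans (hFb x)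
    have hGi : ∀ Q, Integrable (fun ω => (F (fun j => X (min j k) ω) * indL d Q (X (min k k) ω))
        * indR d Q (X (k + 1) ω)) P := by
      intro Q
      refine integrable_of_bdd (c := B) (((hGm Q).comp hstopm).mul
        ((measurable_indR Q).comp (hX _))) fun ω => ?_
      rw [abs_mul]
      exact (mul_le_of_le_one_right (abs_nonneg _) (abs_indR_le _ _)).trans (hGb Q _)
    have hcond : ∀ Q, ∫ ω, (F (fun j => X (min j k) ω) * indL d Q (X (min k k) ω))
        * indR d Q (X (k + 1) ω) ∂P = ∫ ω, F (fun j => X (min j k) ω) * e Q (X k ω) ∂P := by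
      intro Q
      have := chain_mul hX hM (i := k) (by omega) (hGm Q) (hGb Q) (measurable_indR Q) (abs_indR_le Q)
      refine this.trans (integral_congr_ae (Filter.Eventually.of_forall fun ω => ?_))
      simp only [he, min_self]
      rw [mul_assoc, ← integral_const_mul]
      congr 1
      refine integral_congr_ae (Filter.Eventually.of_forall fun y => ?_)
      simp only [indC_eq_mul]
      ring
    have hei : ∀ Q, Integrable (fun ω => F (fun j => X (min j k) ω) * e Q (X k ω)) P := by
      intro Q
      refine integrable_of_bdd (c := B) ((hFm.comp hstopm).mul ((em Q).comp (hX k))) fun ω => ?_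
      rw [abs_mul]
      exact (mul_le_of_le_one_right (abs_nonneg _) (e0 _ _)).trans (hFb _)
    simp_rw [hstep]
    rw [integral_add hFi (integrable_finsetSum _ fun Q _ => (hGi Q).const_mul _),
      integral_finsetSum _ fun Q _ => (hGi Q).const_mul _]
    simp_rw [integral_const_mul, hcond, ← integral_const_mul]
    rw [← integral_finsetSum _ fun Q _ => (hei Q).const_mul _,
      ← integral_add hFi (integrable_finsetSum _ fun Q _ => (hei Q).const_mul _)]
    refine integral_mono (hFi.add (integrable_finsetSum _ fun Q _ => (hei Q).const_mul _)) ?_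
      fun ω => ?_
    · refine integrable_of_bdd (c := exp (∑ Q ∈ p, (|θ Q| * k + |exp (θ Q) - 1| * k)))
        ((measurable_eXp hs p θ).comp (measurable_pi_lambda _ fun i => hX i)).exp fun ω => ?_
      rw [abs_of_pos (exp_pos _)]
      exact exp_le_exp.2 (abs_le.1 (eXp_le (n := k) hs _ p θ)).2
    · -- `1 + t ≤ exp t`
      have h2 : exp (eXp d k s (fun i => X i ω) p θ)
          = F (fun j => X (min j k) ω) * exp (∑ Q ∈ p, (exp (θ Q) - 1) * e Q (X k ω)) := by
        simp only [hF, min_self]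
        rw [eXp_congr (x := fun j => X (min j k) ω) (x' := fun i => X i ω)
          (fun j hj => by simp [hj]), ← exp_add, sub_add_cancel]
      have h3 := add_one_le_exp (∑ Q ∈ p, (exp (θ Q) - 1) * e Q (X k ω))
      have h4 : F (fun j => X (min j k) ω) + ∑ Q ∈ p, (exp (θ Q) - 1) *
          (F (fun j => X (min j k) ω) * e Q (X k ω))
          = F (fun j => X (min j k) ω) * ((∑ Q ∈ p, (exp (θ Q) - 1) * e Q (X k ω)) + 1) := by
        rw [mul_add, mul_one, add_comm, Finset.mul_sum]
        congr 1
        exact Finset.sum_congr rfl fun Q _ => by ring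
      simp only
      rw [h2, h4]
      exact mul_le_mul_of_nonneg_left h3 (exp_pos _).le

lemma lintegral_exp_le [IsProbabilityMeasure P] (hs : IsDens d s) (hX : ∀ i, Measurable (X i))
    (hM : IsMarkovD P n X s) {K : CubeIdx d} {p : Finset (CubeIdx d)} (hp : PartC d K p)
    (θ : CubeIdx d → ℝ) :
    ∫⁻ ω, ENNReal.ofReal (exp (eXp d n s (fun i => X i ω) p θ)) ∂P ≤ 1 := by
  rw [← ofReal_integral_eq_lintegral_ofReal]
  · exact ENNReal.ofReal_le_one.2 (exp_supermartingale hs hX hM hp θ n le_rfl)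
  · refine integrable_of_bdd (c := exp (∑ Q ∈ p, (|θ Q| * n + |exp (θ Q) - 1| * n)))
      ((measurable_eXp hs p θ).comp (measurable_pi_lambda _ fun i => hX i)).exp fun ω => ?_
    rw [abs_of_pos (exp_pos _)]
    exact exp_le_exp.2 (abs_le.1 (eXp_le (n := n) hs _ p θ)).2
  · exact Filter.Eventually.of_forall fun ω => (exp_pos _).le

end

/-! ### Uniform deviations over partitions -/

section
variable {d n : ℕ} {s : (Fin d → ℝ) → (Fin d → ℝ) → ℝ}

/-- The parameter `θ = (c - n) / (64 n)` coded by a vector of integers `c ∈ {0, …, 2n}^p`. -/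
def thC (d n : ℕ) (p : Finset (CubeIdx d)) (c : {Q // Q ∈ p} → Fin (2 * n + 1))
    (Q : CubeIdx d) : ℝ :=
  if h : Q ∈ p then (((c ⟨Q, h⟩ : ℕ) : ℝ) - n) / n / 64 else 0

/-- The union-bound variable: the sum over all dyadic partitions `p` of `K` and all discretised
parameters of the exponential supermartingales, weighted by `n ^ (-3 |p|)`. -/
def xiE (d n : ℕ) (s : (Fin d → ℝ) → (Fin d → ℝ) → ℝ) (x : ℕ → Fin d → ℝ) (K : CubeIdx d) : ℝ≥0∞ :=
  ∑' p : {p // PartC d K p}, ∑ c : {Q // Q ∈ p.1} → Fin (2 * n + 1),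
    ENNReal.ofReal ((1 / (n:ℝ) ^ 3) ^ p.1.card * exp (eXp d n s x p.1 (thC d n p.1 c)))

lemma measurable_xiE (hs : IsDens d s) (K : CubeIdx d) :
    Measurable fun x : ℕ → Fin d → ℝ => xiE d n s x K := by
  unfold xiE
  exact Measurable.tsum fun p => Finset.measurable_sum _ fun c _ =>
    ((measurable_eXp hs _ _).exp.const_mul _).ennreal_ofReal

/-- Finiteness of the union-bound variable yields the uniform deviation inequality. -/
lemma devC_of_xiE (hs : IsDens d s) (hn : 0 < n) {x : ℕ → Fin d → ℝ} {K : CubeIdx d}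
    (h : xiE d n s x K ≠ ⊤) : DevC d n s x K (xiE d n s x K).toReal := by
  intro p hp ψ hψ
  have hn' : (0:ℝ) < n := by exact_mod_cast hn
  have hfl : ∀ Q ∈ p, 0 ≤ ⌊n * ψ Q⌋ + n ∧ ⌊n * ψ Q⌋ ≤ n := by
    intro Q hQ
    obtain ⟨a, b⟩ := abs_le.1 (hψ Q hQ)
    constructor
    · have : (-(n:ℤ)) ≤ ⌊n * ψ Q⌋ := by
        rw [Int.le_floor]; push_cast; nlinarith
      omega
    · have : (⌊n * ψ Q⌋ : ℝ) ≤ (n:ℤ) := (Int.floor_le _).trans (by push_cast; nlinarith)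
      exact_mod_cast this
  -- the discretisation of `ψ` from below, at scale `1 / n`
  set c : {Q // Q ∈ p} → Fin (2 * n + 1) := fun Q =>
    ⟨(⌊n * ψ Q⌋ + n).toNat, by have := hfl Q.1 Q.2; omega⟩ with hc
  have hθ : ∀ Q ∈ p, thC d n p c Q = (⌊n * ψ Q⌋ : ℝ) / n / 64 := by
    intro Q hQ
    unfold thC
    rw [dif_pos hQ]
    have e : (((⌊n * ψ Q⌋ + n).toNat : ℕ) : ℤ) = ⌊n * ψ Q⌋ + n := Int.toNat_of_nonneg (hfl Q hQ).1
    have e' : (((⌊n * ψ Q⌋ + n).toNat : ℕ) : ℝ) = ⌊n * ψ Q⌋ + n := by exact_mod_cast e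
    simp only [hc]
    rw [e', add_sub_cancel_right]
  have h1 : (1 / (n:ℝ) ^ 3) ^ p.card * exp (eXp d n s x p (thC d n p c))
      ≤ (xiE d n s x K).toReal := by
    rw [← ENNReal.ofReal_le_iff_le_toReal h]
    unfold xiE
    refine le_trans ?_ (ENNReal.le_tsum (⟨p, hp⟩ : {p // PartC d K p}))
    exact Finset.single_le_sum (f := fun c : {Q // Q ∈ p} → Fin (2 * n + 1) =>
      ENNReal.ofReal ((1 / (n:ℝ) ^ 3) ^ p.card * exp (eXp d n s x p (thC d n p c))))
      (fun _ _ => zero_le) (Finset.mem_univ c)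
  have h2 : (1 / (n:ℝ) ^ 3) ^ p.card * exp (eXp d n s x p (thC d n p c))
      = exp (eXp d n s x p (thC d n p c) - 3 * log n * p.card) := by
    have : (1 / (n:ℝ) ^ 3) ^ p.card = exp (-(3 * log n * p.card)) := by
      rw [one_div, inv_pow, ← pow_mul, exp_neg]
      congr 1
      rw [show 3 * log n * p.card = log n * ((3 * p.card : ℕ) : ℝ) by push_cast; ring,
        exp_mul, exp_log hn', rpow_natCast]
    rw [this, ← exp_add]; congr 1; ring
  rw [h2] at h1
  have h3 := add_one_le_exp (eXp d n s x p (thC d n p c) - 3 * log n * p.card)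
  have hN : ∑ Q ∈ p, cN d n x Q / n ≤ 1 := by
    rw [← Finset.sum_div, ← cN_sum hp, div_le_one hn']
    exact cN_le _ _
  have h4 : ∀ Q ∈ p, ψ Q * cN d n x Q ≤ 64 * (thC d n p c Q * cN d n x Q
        - (exp (thC d n p c Q) - 1) * cE d n s x Q) + cN d n x Q / n
        + (ψ Q + ψ Q ^ 2 / 64) * cE d n s x Q := by
    intro Q hQ
    have hN0 := cN_nonneg (n := n) Q x
    have hE0 := cE_nonneg (n := n) hs Q x
    have t1 : thC d n p c Q ≤ ψ Q / 64 := by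
      rw [hθ Q hQ]
      gcongr
      rw [div_le_iff₀ hn', mul_comm]
      exact Int.floor_le _
    have t2 : ψ Q ≤ 64 * thC d n p c Q + 1 / n := by
      rw [hθ Q hQ]
      have := (Int.lt_floor_add_one (n * ψ Q)).le
      have e : 64 * ((⌊n * ψ Q⌋ : ℝ) / n / 64) + 1 / n = (⌊n * ψ Q⌋ + 1) / n := by ring
      rw [e, le_div_iff₀ hn', mul_comm]
      exact this
    obtain ⟨a, b⟩ := abs_le.1 (hψ Q hQ)
    have t3 : exp (thC d n p c Q) - 1 ≤ ψ Q / 64 + (ψ Q / 64) ^ 2 := by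
      have := (abs_le.1 (Real.abs_exp_sub_one_sub_id_le (x := ψ Q / 64)
        (abs_le.2 ⟨by linarith, by linarith⟩))).2
      have := exp_le_exp.2 t1
      linarith
    have t4 : ψ Q * cN d n x Q ≤ (64 * thC d n p c Q + 1 / n) * cN d n x Q := by gcongr
    have t5 : (exp (thC d n p c Q) - 1) * cE d n s x Q
        ≤ (ψ Q / 64 + (ψ Q / 64) ^ 2) * cE d n s x Q := by gcongr
    have e : (64 * thC d n p c Q + 1 / n) * cN d n x Q
      = 64 * (thC d n p c Q * cN d n x Q) + cN d n x Q / n := by ring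
    nlinarith
  have h5 := Finset.sum_le_sum h4
  rw [Finset.sum_add_distrib, Finset.sum_add_distrib, ← Finset.mul_sum] at h5
  unfold eXp at h1 h3
  linarith

end

section
variable {d n : ℕ} {s : (Fin d → ℝ) → (Fin d → ℝ) → ℝ} {Ω : Type*} [mΩ : MeasurableSpace Ω]
  {P : Measure Ω} {X : ℕ → Ω → (Fin d → ℝ)}

/-- The weights `n ^ (-3 |p|)` pay for the `(2n + 1) ^ |p|` discretised parameters and for the number
of dyadic partitions. -/
lemma lintegral_xiE_le [IsProbabilityMeasure P] (hd : 0 < d) (hn : 3 < n) (hs : IsDens d s)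
    (hX : ∀ i, Measurable (X i)) (hM : IsMarkovD P n X s) (K : CubeIdx d) :
    ∫⁻ ω, xiE d n s (fun i => X i ω) K ∂P ≤ 1 := by
  have hn' : (4:ℝ) ≤ n := by exact_mod_cast hn
  have hXm : Measurable fun ω i => X i ω := measurable_pi_lambda _ hX
  have hm : ∀ (p : Finset (CubeIdx d)) (θ : CubeIdx d → ℝ), Measurable fun ω =>
      ENNReal.ofReal (exp (eXp d n s (fun i => X i ω) p θ)) := fun p θ =>
    ((measurable_eXp hs p θ).comp hXm).exp.ennreal_ofReal
  unfold xiE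
  have e : ∀ (p : Finset (CubeIdx d)) (ω : Ω) (θ : CubeIdx d → ℝ),
      ENNReal.ofReal ((1 / (n:ℝ) ^ 3) ^ p.card * exp (eXp d n s (fun i => X i ω) p θ))
      = ENNReal.ofReal ((1 / (n:ℝ) ^ 3) ^ p.card)
        * ENNReal.ofReal (exp (eXp d n s (fun i => X i ω) p θ)) := fun p ω θ =>
    ENNReal.ofReal_mul (by positivity)
  simp_rw [e]
  rw [lintegral_tsum fun p => (Finset.measurable_sum _ fun c _ =>
    (hm _ _).const_mul _).aemeasurable]
  have hy : ((2 * n + 1 : ℕ) : ℝ) / (n:ℝ) ^ 3 ≤ 1 / 4 := by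
    rw [div_le_iff₀ (by positivity)]
    push_cast
    nlinarith [pow_pos (by linarith : (0:ℝ) < n) 2, mul_le_mul hn' hn' (by norm_num) (by linarith)]
  calc _ ≤ ∑' p : {p // PartC d K p},
        ENNReal.ofReal ((((2 * n + 1 : ℕ) : ℝ) / (n:ℝ) ^ 3) ^ p.1.card) := by
        refine ENNReal.tsum_le_tsum fun p => ?_
        rw [lintegral_finsetSum _ fun c _ => (hm _ _).const_mul _]
        calc _ ≤ ∑ c : {Q // Q ∈ p.1} → Fin (2 * n + 1),
              ENNReal.ofReal ((1 / (n:ℝ) ^ 3) ^ p.1.card) := by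
              refine Finset.sum_le_sum fun c _ => ?_
              rw [lintegral_const_mul _ (hm _ _)]
              exact mul_le_of_le_one_right (zero_le) (lintegral_exp_le hs hX hM p.2 _)
          _ = _ := by
              rw [Finset.sum_const, Finset.card_univ, Fintype.card_fun, Fintype.card_fin,
                Fintype.card_coe, nsmul_eq_mul, ← ENNReal.ofReal_natCast,
                ← ENNReal.ofReal_mul (by positivity)]
              congr 1
              push_cast
              rw [div_pow, div_pow, one_pow]
              ring
    _ ≤ _ := tsum_part_le hd (by positivity) hy K
    _ ≤ 1 := ENNReal.ofReal_le_one.2 (by linarith)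

end

/-! ### Risk of a histogram -/

/-- A squared Hellinger-type deviation is dominated by exponential moments over a dyadic grid of
parameters: the optimal parameter `|N - E| / (2 E)` is replaced by a neighbouring power of two. -/
lemma sqrt_dev_le {n : ℕ} (hn : 3 < n) {N E : ℝ} (hN : 0 ≤ N) (hE : 0 ≤ E) (hEn : E ≤ n) :
    (√N - √E) ^ 2 ≤ 8 * (∑ k ∈ Finset.range (Nat.log 2 n + 1),
      (exp ((1 / 2) ^ k * N - (exp ((1 / 2) ^ k) - 1) * E)
        + exp (-(1 / 2) ^ k * N - (exp (-(1 / 2) ^ k) - 1) * E))) + 4 := by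
  have hpos : ∀ k ∈ Finset.range (Nat.log 2 n + 1),
      0 ≤ exp ((1 / 2) ^ k * N - (exp ((1 / 2) ^ k) - 1) * E)
        + exp (-(1 / 2) ^ k * N - (exp (-(1 / 2) ^ k) - 1) * E) := fun k _ => by positivity
  have key : ∀ k ∈ Finset.range (Nat.log 2 n + 1),
      (1 / 2) ^ k * |N - E| - ((1 / 2) ^ k) ^ 2 * E ≤ ∑ k ∈ Finset.range (Nat.log 2 n + 1),
      (exp ((1 / 2) ^ k * N - (exp ((1 / 2) ^ k) - 1) * E)
        + exp (-(1 / 2) ^ k * N - (exp (-(1 / 2) ^ k) - 1) * E)) := by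
    intro k hk
    refine le_trans ?_ (Finset.single_le_sum hpos hk)
    set l : ℝ := (1 / 2) ^ k with hl
    have l0 : 0 ≤ l := by positivity
    have l1 : l ≤ 1 := pow_le_one₀ (by norm_num) (by norm_num)
    have b1 := (abs_le.1 (Real.abs_exp_sub_one_sub_id_le (x := l) (abs_le.2 ⟨by linarith, l1⟩))).2
    have b2 := (abs_le.1 (Real.abs_exp_sub_one_sub_id_le (x := -l)
      (abs_le.2 ⟨by linarith, by linarith⟩))).2
    have c1 := add_one_le_exp (l * N - (exp l - 1) * E)
    have c2 := add_one_le_exp (-l * N - (exp (-l) - 1) * E)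
    have d1 := exp_pos (l * N - (exp l - 1) * E)
    have d2 := exp_pos (-l * N - (exp (-l) - 1) * E)
    have e1 : (exp l - 1) * E ≤ (l + l ^ 2) * E := by gcongr; linarith
    have e2 : (exp (-l) - 1) * E ≤ (-l + l ^ 2) * E := by gcongr; linarith
    rcases abs_cases (N - E) with ⟨h, _⟩ | ⟨h, _⟩ <;> rw [h]
    · linarith
    · linarith
  have hS := Finset.sum_nonneg hpos
  set S := ∑ k ∈ Finset.range (Nat.log 2 n + 1),
      (exp ((1 / 2) ^ k * N - (exp ((1 / 2) ^ k) - 1) * E)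
        + exp (-(1 / 2) ^ k * N - (exp (-(1 / 2) ^ k) - 1) * E)) with hSdef
  have sN := Real.sq_sqrt hN
  have sE := Real.sq_sqrt hE
  have aN := Real.sqrt_nonneg N
  have aE := Real.sqrt_nonneg E
  have hδ : |N - E| = |√N - √E| * (√N + √E) := by
    rw [← abs_of_nonneg (add_nonneg aN aE), ← abs_mul]
    congr 1; nlinarith
  have habs := sq_abs (√N - √E)
  have ha0 := abs_nonneg (√N - √E)
  rcases lt_or_ge (2 * E) |N - E| with h | h
  · have h0 := key 0 (by simp)
    simp only [pow_zero, one_pow, one_mul] at h0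
    have : |√N - √E| ≤ √N + √E := abs_le.2 ⟨by linarith, by linarith⟩
    have : (√N - √E) ^ 2 ≤ |N - E| := by rw [hδ, ← habs]; nlinarith
    linarith
  · rcases hE.eq_or_lt with rfl | hE'
    · have : N = 0 := by
        have := abs_nonpos_iff.1 (h.trans_eq (by ring)); linarith
      subst this; simp; positivity
    set δ := |N - E| with hδd
    have hδ0 : 0 ≤ δ := abs_nonneg _
    have hsq : (√N - √E) ^ 2 * E ≤ δ ^ 2 := by
      rw [hδ, mul_pow, habs]
      refine mul_le_mul_of_nonneg_left ?_ (sq_nonneg _)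
      nlinarith
    by_cases hex : ∃ k ≤ Nat.log 2 n, (1 / 2 : ℝ) ^ k * (2 * E) ≤ δ
    · -- the first grid point below the optimal parameter
      have hk := Nat.find_spec hex
      set k := Nat.find hex with hkd
      have h1 := key k (Finset.mem_range.2 (by omega))
      have h2 : δ ≤ 2 * ((1 / 2 : ℝ) ^ k * (2 * E)) := by
        rcases Nat.eq_zero_or_pos k with h0 | h0
        · rw [h0, pow_zero]; linarith
        · have hlt := Nat.find_min hex (m := k - 1) (by omega)
          push Not at hlt
          have := (hlt (by omega)).le
          have e : (1 / 2 : ℝ) ^ (k - 1) = 2 * (1 / 2) ^ k := by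
            obtain ⟨j, hj⟩ : ∃ j, k = j + 1 := ⟨k - 1, by omega⟩
            rw [hj, Nat.add_sub_cancel, pow_succ]; ring
          rw [e] at this; linarith
      set l := (1 / 2 : ℝ) ^ k
      have l0 : 0 < l := by positivity
      have h3 : l * δ / 2 ≤ S := by nlinarith [hk.2]
      have h4 : δ ^ 2 ≤ 8 * S * E := by nlinarith
      have : (√N - √E) ^ 2 ≤ 8 * S := le_of_mul_le_mul_right (hsq.trans h4) hE'
      linarith
    · push Not at hex
      have h1 := hex (Nat.log 2 n) le_rfl
      set q := (1 / 2 : ℝ) ^ (Nat.log 2 n) with hq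
      have hq0 : 0 < q := by positivity
      have hq1 : q * n ≤ 2 := by
        have h2 : n < 2 ^ (Nat.log 2 n + 1) := Nat.lt_pow_succ_log_self (by norm_num) n
        have h3 : (n:ℝ) ≤ 2 ^ (Nat.log 2 n) * 2 := by
          rw [pow_succ] at h2; exact_mod_cast h2.le
        calc q * n ≤ q * (2 ^ (Nat.log 2 n) * 2) := by gcongr
          _ = 2 := by rw [hq, ← mul_assoc, ← mul_pow]; norm_num
      have hn' : (4:ℝ) ≤ n := by exact_mod_cast hn
      have hq2 : q ^ 2 * n ≤ 1 := by nlinarith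
      have h5 : δ ^ 2 ≤ (q * (2 * E)) ^ 2 := by gcongr
      have h6 : (√N - √E) ^ 2 ≤ 4 * (q ^ 2 * E) := by
        refine le_of_mul_le_mul_right (hsq.trans (h5.trans_eq ?_)) hE'
        ring
      have h7 : q ^ 2 * E ≤ q ^ 2 * n := by gcongr
      linarith

lemma natlog_le {n : ℕ} (hn : 3 < n) :
    16 * ((Nat.log 2 n : ℝ) + 1) + 4 ≤ 40 * log n ∧ 1 ≤ log n := by
  have h4 : (4:ℝ) ≤ n := by exact_mod_cast hn
  have l2 := Real.log_two_gt_d9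
  have h1 : 2 * log 2 ≤ log n := by
    rw [← Real.log_rpow (by norm_num)]
    exact Real.log_le_log (by positivity) (by norm_num; linarith)
  have h2 : (Nat.log 2 n : ℝ) * log 2 ≤ log n := by
    rw [← Real.log_rpow (by norm_num), Real.rpow_natCast]
    refine Real.log_le_log (by positivity) ?_
    exact_mod_cast Nat.pow_log_le_self 2 (by omega)
  have h3 : (0:ℝ) ≤ Nat.log 2 n := Nat.cast_nonneg _
  constructor <;> nlinarith

section
variable {d n : ℕ} {s : (Fin d → ℝ) → (Fin d → ℝ) → ℝ}

/-- The minimum of `cH` over the constants `a`, attained at `√a = cR / cD` (see `cH_eq`). -/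
def cB (d n : ℕ) (s : (Fin d → ℝ) → (Fin d → ℝ) → ℝ) (x : ℕ → Fin d → ℝ) (K : CubeIdx d) : ℝ :=
  cE d n s x K - cR d n s x K ^ 2 / cD d n x K

lemma cH_eq (K : CubeIdx d) (x : ℕ → Fin d → ℝ) {a : ℝ} (ha : 0 ≤ a) :
    cH d n s x K a = cB d n s x K + cD d n x K * (√a - cR d n s x K / cD d n x K) ^ 2 := by
  unfold cH cB
  rcases (cD_nonneg (n := n) K x).eq_or_lt with h | h
  · obtain ⟨h1, h2⟩ := cE_cR_eq_zero (s := s) K x h.symm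
    rw [h1, h2, ← h]; simp
  · have := Real.sq_sqrt ha
    field_simp
    rw [← this]; simp only [Real.sqrt_sq (Real.sqrt_nonneg a)]; ring

lemma cB_nonneg (hs : IsDens d s) (K : CubeIdx d) (x : ℕ → Fin d → ℝ) : 0 ≤ cB d n s x K := by
  have hr : 0 ≤ cR d n s x K / cD d n x K := div_nonneg (cR_nonneg _ _) (cD_nonneg _ _)
  have h1 := cH_nonneg (n := n) hs K x (sq_nonneg (cR d n s x K / cD d n x K))
  rw [cH_eq K x (sq_nonneg _), Real.sqrt_sq hr, sub_self] at h1
  simpa using h1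

lemma cB_le (hs : IsDens d s) (K : CubeIdx d) (x : ℕ → Fin d → ℝ) : cB d n s x K ≤ n := by
  have h1 := cE_le (n := n) hs K x
  have h2 : 0 ≤ cR d n s x K ^ 2 / cD d n x K := div_nonneg (sq_nonneg _) (cD_nonneg _ _)
  unfold cB; linarith

lemma measurable_cB (hs : IsDens d s) (K : CubeIdx d) :
    Measurable fun x : ℕ → Fin d → ℝ => cB d n s x K :=
  (measurable_cE hs K).sub (((measurable_cR hs K).pow_const 2).div (measurable_cD K))

/-- Bias-variance decomposition of the loss of the histogram on a cube. -/
lemma cH_hgt_le (hs : IsDens d s) (K : CubeIdx d) (x : ℕ → Fin d → ℝ) :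
    cH d n s x K (hgt d n x K)
      ≤ 3 * cB d n s x K + 2 * (√(cN d n x K) - √(cE d n s x K)) ^ 2 := by
  have hB := cB_nonneg (n := n) hs K x
  rw [cH_eq K x (hgt_nonneg x K)]
  unfold hgt
  rcases (cD_nonneg (n := n) K x).eq_or_lt with h | h
  · rw [← h]
    have := sq_nonneg (√(cN d n x K) - √(cE d n s x K))
    simp only [zero_mul, add_zero]
    linarith
  · set D := cD d n x K
    set R := cR d n s x K
    set N := cN d n x K
    have hR : 0 ≤ R := cR_nonneg _ _
    have hE : 0 ≤ cE d n s x K := cE_nonneg hs _ _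
    have sD := Real.sq_sqrt h.le
    have pD := Real.sqrt_pos.2 h
    set r := R / √D with hr
    have hr0 : 0 ≤ r := by positivity
    have e1 : D * (√(N / D) - R / D) ^ 2 = (√N - r) ^ 2 := by
      rw [Real.sqrt_div' _ h.le, hr]
      have : R / D = R / √D / √D := by rw [div_div, ← pow_two, sD]
      rw [this, ← sub_div, div_pow, sD]
      field_simp
    have e2 : cB d n s x K = cE d n s x K - r ^ 2 := by
      unfold cB; rw [hr, div_pow, sD]
    have sE := Real.sq_sqrt hE
    set e := √(cE d n s x K)
    have he0 : 0 ≤ e := Real.sqrt_nonneg _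
    have hre : r ≤ e := by
      rw [e2, ← sE] at hB
      exact abs_le_of_sq_le_sq' (by linarith) he0 |>.2
    rw [e1]
    have : (e - r) ^ 2 ≤ cB d n s x K := by rw [e2, ← sE]; nlinarith
    nlinarith [sq_nonneg (√N - e - (e - r))]

end

section
variable {d n : ℕ} {s : (Fin d → ℝ) → (Fin d → ℝ) → ℝ} {Ω : Type*} {X : ℕ → Ω → (Fin d → ℝ)}

/-- The distance from `s 1_A` to the piecewise constant functions, computed cube by cube. -/
lemma sInf_VmD (hs : IsDens d s) {m : Finset (CubeIdx d)} (hm : PartC d (rootC d) m) (ω : Ω) :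
    sInf {y : ℝ | ∃ g ∈ VmD d m, y = hellSq d n X ω (sIndA d s) g}
      = (1 / n) * (∑ K ∈ m, cB d n s (fun i => X i ω) K / 2) := by
  refine IsLeast.csInf_eq ⟨?_, ?_⟩
  · -- on each cube the optimal constant is the square of the average of `√s`
    refine ⟨_, ⟨fun K => (cR d n s (fun i => X i ω) K / cD d n (fun i => X i ω) K) ^ 2,
      fun K _ => sq_nonneg _, rfl⟩, ?_⟩
    rw [hellSq_pc hs hm _ fun K _ => sq_nonneg _]
    congr 1
    refine Finset.sum_congr rfl fun K _ => ?_
    have hr : 0 ≤ cR d n s (fun i => X i ω) K / cD d n (fun i => X i ω) K :=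
      div_nonneg (cR_nonneg _ _) (cD_nonneg _ _)
    rw [cH_eq _ _ (sq_nonneg _), Real.sqrt_sq hr, sub_self]
    simp
  · rintro y ⟨g, ⟨a, ha, rfl⟩, rfl⟩
    rw [hellSq_pc hs hm a ha]
    refine mul_le_mul_of_nonneg_left (Finset.sum_le_sum fun K hK => ?_) (by positivity)
    rw [cH_eq _ _ (ha K hK)]
    have := mul_nonneg (cD_nonneg (n := n) K fun i => X i ω)
      (sq_nonneg (√(a K) - cR d n s (fun i => X i ω) K / cD d n (fun i => X i ω) K))
    linarith

end

section
variable {d n : ℕ} {s : (Fin d → ℝ) → (Fin d → ℝ) → ℝ} {Ω : Type*} [mΩ : MeasurableSpace Ω]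
  {P : Measure Ω} {X : ℕ → Ω → (Fin d → ℝ)}

lemma dev_exp_integral [IsProbabilityMeasure P] (hs : IsDens d s) (hX : ∀ i, Measurable (X i))
    (hM : IsMarkovD P n X s) (K : CubeIdx d) (t : ℝ) :
    Integrable (fun ω => exp (t * cN d n (fun i => X i ω) K
      - (exp t - 1) * cE d n s (fun i => X i ω) K)) P ∧
    ∫ ω, exp (t * cN d n (fun i => X i ω) K
      - (exp t - 1) * cE d n s (fun i => X i ω) K) ∂P ≤ 1 := by
  have hXm : Measurable fun ω i => X i ω := measurable_pi_lambda _ hX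
  have e : ∀ x : ℕ → Fin d → ℝ, t * cN d n x K - (exp t - 1) * cE d n s x K
      = eXp d n s x {K} (fun _ => t) := fun x => by simp [eXp]
  simp only [e]
  refine ⟨integrable_of_bdd (c := exp (∑ Q ∈ ({K} : Finset (CubeIdx d)),
    (|t| * n + |exp t - 1| * n))) ((measurable_eXp hs _ _).comp hXm).exp fun ω => ?_,
    exp_supermartingale hs hX hM ⟨0, IsPartOf.leaf 0 K⟩ _ n le_rfl⟩
  rw [abs_of_pos (exp_pos _), exp_le_exp]
  exact (le_abs_self _).trans (eXp_le hs _ _ _)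

/-- The squared deviation between the roots of the count and of its compensator is at most of order
`log n` in expectation. -/
lemma sqrt_dev_integral [IsProbabilityMeasure P] (hn : 3 < n) (hs : IsDens d s)
    (hX : ∀ i, Measurable (X i)) (hM : IsMarkovD P n X s) (K : CubeIdx d) :
    Integrable (fun ω => (√(cN d n (fun i => X i ω) K) - √(cE d n s (fun i => X i ω) K)) ^ 2) P ∧
    ∫ ω, (√(cN d n (fun i => X i ω) K) - √(cE d n s (fun i => X i ω) K)) ^ 2 ∂P
      ≤ 40 * log n := by
  have hXm : Measurable fun ω i => X i ω := measurable_pi_lambda _ hX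
  have hpair : ∀ k : ℕ, Integrable (fun ω => exp ((1 / 2) ^ k * cN d n (fun i => X i ω) K
          - (exp ((1 / 2) ^ k) - 1) * cE d n s (fun i => X i ω) K)
        + exp (-(1 / 2) ^ k * cN d n (fun i => X i ω) K
          - (exp (-(1 / 2) ^ k) - 1) * cE d n s (fun i => X i ω) K)) P := fun k =>
    (dev_exp_integral hs hX hM K _).1.add (dev_exp_integral hs hX hM K _).1
  have hint : Integrable (fun ω => 8 * (∑ k ∈ Finset.range (Nat.log 2 n + 1),
      (exp ((1 / 2) ^ k * cN d n (fun i => X i ω) K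
          - (exp ((1 / 2) ^ k) - 1) * cE d n s (fun i => X i ω) K)
        + exp (-(1 / 2) ^ k * cN d n (fun i => X i ω) K
          - (exp (-(1 / 2) ^ k) - 1) * cE d n s (fun i => X i ω) K))) + 4) P :=
    ((integrable_finsetSum _ fun k _ => hpair k).const_mul _).add (integrable_const _)
  have hle := fun ω => sqrt_dev_le hn (cN_nonneg (n := n) K fun i => X i ω)
    (cE_nonneg (n := n) hs K fun i => X i ω) (cE_le (n := n) hs K fun i => X i ω)
  have hmeas : Measurable fun ω =>
      (√(cN d n (fun i => X i ω) K) - √(cE d n s (fun i => X i ω) K)) ^ 2 :=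
    (((measurable_cN K).comp hXm).sqrt.sub ((measurable_cE hs K).comp hXm).sqrt).pow_const 2
  have hI := hint.mono' hmeas.aestronglyMeasurable (Filter.Eventually.of_forall fun ω => by
    rw [Real.norm_of_nonneg (sq_nonneg _)]; exact hle ω)
  refine ⟨hI, (integral_mono hI hint hle).trans (le_trans ?_ (natlog_le hn).1)⟩
  rw [integral_add ((integrable_finsetSum _ fun k _ => hpair k).const_mul _) (integrable_const _),
    integral_const_mul, integral_finsetSum _ fun k _ => hpair k]
  have h2 : ∑ k ∈ Finset.range (Nat.log 2 n + 1),
      ∫ ω, (exp ((1 / 2) ^ k * cN d n (fun i => X i ω) K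
          - (exp ((1 / 2) ^ k) - 1) * cE d n s (fun i => X i ω) K)
        + exp (-(1 / 2) ^ k * cN d n (fun i => X i ω) K
          - (exp (-(1 / 2) ^ k) - 1) * cE d n s (fun i => X i ω) K)) ∂P
      ≤ ∑ k ∈ Finset.range (Nat.log 2 n + 1), (2:ℝ) := by
    refine Finset.sum_le_sum fun k _ => ?_
    have a1 := dev_exp_integral hs hX hM K ((1 / 2) ^ k)
    have a2 := dev_exp_integral hs hX hM K (-(1 / 2) ^ k)
    rw [integral_add a1.1 a2.1]
    linarith [a1.2, a2.2]
  rw [Finset.sum_const, Finset.card_range, nsmul_eq_mul] at h2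
  push_cast at h2
  simp only [integral_const, probReal_univ, smul_eq_mul]
  linarith

/-- The oracle inequality against a fixed partition `m`. -/
lemma risk_bound [IsProbabilityMeasure P] (hd : 0 < d) (hn : 3 < n) (hs : IsDens d s)
    (hX : ∀ i, Measurable (X i)) (hM : IsMarkovD P n X s) {L : ℝ} (hL : 192 ≤ L) {ℓ : ℕ∞}
    {mhat : Ω → Finset (CubeIdx d)} (hmem : ∀ ω, mhat ω ∈ MpartE d ℓ)
    (hsel : ∀ ω, gammaSel d n X L ℓ ω (mhat ω)
      ≤ (⨅ m : MpartE d ℓ, gammaSel d n X L ℓ ω (m : Finset (CubeIdx d))) + 1 / n)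
    {m : Finset (CubeIdx d)} (hm : m ∈ MpartE d ℓ) :
    ∫ ω, hellSq d n X ω (sIndA d s) (histEst d n X (mhat ω) ω) ∂P
      ≤ 75 * (∫ ω, sInf {y : ℝ | ∃ g ∈ VmD d m, y = hellSq d n X ω (sIndA d s) g} ∂P)
        + 30 * penC L n m.card := by
  have hXm : Measurable fun ω i => X i ω := measurable_pi_lambda _ hX
  have hn0 : 0 < n := by omega
  have hn' : (0:ℝ) < n := by exact_mod_cast hn0
  have hmP := partE_part hm
  simp only [sInf_VmD hs hmP]
  have hBi : ∀ K, Integrable (fun ω => cB d n s (fun i => X i ω) K) P := fun K =>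
    integrable_of_bdd (c := n) ((measurable_cB hs K).comp hXm) fun ω => by
      rw [abs_of_nonneg (cB_nonneg hs _ _)]; exact cB_le hs _ _
  have hB : Integrable (fun ω => (1 / (n:ℝ)) * (∑ K ∈ m, cB d n s (fun i => X i ω) K / 2)) P :=
    (integrable_finsetSum _ fun K _ => (hBi K).div_const _).const_mul _
  have hxm : ∀ K, Measurable fun ω => xiE d n s (fun i => X i ω) K := fun K =>
    (measurable_xiE hs K).comp hXm
  have hxl := fun K => lintegral_xiE_le hd hn hs hX hM K
  have hxt : ∀ K, ∫⁻ ω, xiE d n s (fun i => X i ω) K ∂P ≠ ⊤ := fun K =>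
    ne_top_of_le_ne_top ENNReal.one_ne_top (hxl K)
  have hae : ∀ᵐ ω ∂P, ∀ K, xiE d n s (fun i => X i ω) K < ⊤ :=
    ae_all_iff.2 fun K => ae_lt_top (hxm K) (hxt K)
  have hxi : ∀ K, Integrable (fun ω => (xiE d n s (fun i => X i ω) K).toReal) P := fun K =>
    integrable_toReal_of_lintegral_ne_top (hxm K).aemeasurable (hxt K)
  have hx1 : ∀ K, ∫ ω, (xiE d n s (fun i => X i ω) K).toReal ∂P ≤ 1 := fun K => by
    rw [integral_toReal (hxm K).aemeasurable (ae_lt_top (hxm K) (hxt K))]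
    exact ENNReal.toReal_le_of_le_ofReal (by norm_num) (by simpa using hxl K)
  have hS := fun K => sqrt_dev_integral hn hs hX hM K
  have hSi : Integrable (fun ω => ∑ K ∈ m, (√(cN d n (fun i => X i ω) K)
      - √(cE d n s (fun i => X i ω) K)) ^ 2) P := integrable_finsetSum _ fun K _ => (hS K).1
  have hXi : Integrable (fun ω => ∑ K ∈ m, (xiE d n s (fun i => X i ω) K).toReal) P :=
    integrable_finsetSum _ fun K _ => hxi K
  set q := penC L n m.card with hq
  have hG1 := (hB.const_mul 75).add (hSi.const_mul (25 / (n:ℝ)))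
  have hG2 := hG1.add (hXi.const_mul (640 / (n:ℝ)))
  have hG := hG2.add (integrable_const (20 * q + (10 * (m.card : ℝ) + 5) / n))
  have key := integral_mono_of_nonneg (μ := P)
    (f := fun ω => hellSq d n X ω (sIndA d s) (histEst d n X (mhat ω) ω))
    (Filter.Eventually.of_forall fun ω => hellSq_nonneg _ _) hG (by
      filter_upwards [hae] with ω hω
      have h1 := selection_bound hs hn0 hL (fun K => devC_of_xiE hs hn0 (hω K).ne) hm
        (hmem ω) (hsel ω)
      have h2 : hellSq d n X ω (sIndA d s) (histEst d n X m ω)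
          ≤ 3 * ((1 / (n:ℝ)) * (∑ K ∈ m, cB d n s (fun i => X i ω) K / 2))
            + (1 / n) * ∑ K ∈ m, (√(cN d n (fun i => X i ω) K)
              - √(cE d n s (fun i => X i ω) K)) ^ 2 := by
        rw [hellSq_hist hs hmP, mul_left_comm, ← mul_add]
        refine mul_le_mul_of_nonneg_left ?_ (by positivity)
        rw [Finset.mul_sum, ← Finset.sum_add_distrib]
        refine Finset.sum_le_sum fun K _ => ?_
        have := cH_hgt_le (n := n) hs K fun i => X i ω
        linarith
      simp only [Pi.add_apply]
      have e1 : (25:ℝ) / n = 25 * (1 / n) := by ring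
      have e2 : (640:ℝ) / n = 640 * (1 / n) := by ring
      have e3 : (10 * (m.card:ℝ) + 5) / n = 5 * ((1 / n) * (2 * m.card + 1)) := by ring
      rw [e1, e2, e3, mul_assoc, mul_assoc]
      rw [mul_add, ← mul_assoc (1 / (n:ℝ)) 128, mul_comm (1 / (n:ℝ)) 128, mul_assoc] at h1
      linarith)
  refine key.trans ?_
  rw [integral_add' hG2 (integrable_const _), integral_add' hG1 (hXi.const_mul _),
    integral_add' (hB.const_mul 75) (hSi.const_mul _),
    integral_const_mul (75 : ℝ), integral_const_mul (25 / (n : ℝ)),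
    integral_const_mul (640 / (n : ℝ)), integral_finsetSum _ fun K _ => (hS K).1,
    integral_finsetSum _ fun K _ => hxi K, integral_const, probReal_univ, one_smul]
  have b1 := Finset.sum_le_sum fun K (_ : K ∈ m) => (hS K).2
  have b2 := Finset.sum_le_sum fun K (_ : K ∈ m) => hx1 K
  rw [Finset.sum_const, nsmul_eq_mul] at b1 b2
  have hc : (1:ℝ) ≤ m.card := by
    obtain ⟨h, hh⟩ := hmP
    obtain ⟨Q, hQ, -⟩ := part_exists hh (fun _ => 0) (fun i => by
      simp [rootC, dyadicI])
    exact_mod_cast Finset.card_pos.2 ⟨Q, hQ⟩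
  have hl := (natlog_le hn).2
  set l := log n with hldef
  set c : ℝ := (m.card : ℝ) with hcdef
  have hcl : c ≤ c * l := by nlinarith
  have b1' : 25 / (n:ℝ) * (∑ K ∈ m, ∫ ω, (√(cN d n (fun i => X i ω) K)
      - √(cE d n s (fun i => X i ω) K)) ^ 2 ∂P) ≤ 1000 * (c * l) / n := by
    calc _ ≤ 25 / (n:ℝ) * (c * (40 * l)) := by gcongr
      _ = _ := by ring
  have b2' : 640 / (n:ℝ) * (∑ K ∈ m, ∫ ω, (xiE d n s (fun i => X i ω) K).toReal ∂P)
      ≤ 640 * (c * l) / n := by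
    calc _ ≤ 640 / (n:ℝ) * (c * 1) := by gcongr
      _ = 640 * c / n := by ring
      _ ≤ _ := by gcongr
  have b3 : (10 * c + 5) / n ≤ 15 * (c * l) / n := by gcongr; linarith
  have b4 : 1920 * (c * l) / n ≤ 10 * q := by
    have : 192 * (c * l) / n ≤ L * (c * l) / n := by gcongr
    have e : q = L * (c * l) / n := by rw [hq, penC]; ring
    rw [e]
    calc 1920 * (c * l) / n = 10 * (192 * (c * l) / n) := by ring
      _ ≤ _ := by gcongr
  have b5 : 1000 * (c * l) / n + 640 * (c * l) / n + 15 * (c * l) / n ≤ 1920 * (c * l) / n := by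
    rw [← add_div, ← add_div]; gcongr; nlinarith
  linarith

end

/-! ### The oracle inequality -/

/-- **Theorem 1 of the paper.** There are universal constants `L₀, C > 0`
such that for every `L ≥ L₀` and every `ℓ ∈ ℕ* ∪ {∞}`, any estimator `ŝ = ŝ_{mhat}` selected
by the rule `γ(mhat) ≤ inf_{m ∈ 𝓜_ℓ} γ(m) + 1/n` satisfies
`C E[H²(s 1_A, ŝ)] ≤ inf_{m ∈ 𝓜_ℓ} { E[H²(s 1_A, V_m)] + L |m| log n / n }`. -/
theorem stmt_4 :
    ∃ L₀ C : ℝ, 0 < L₀ ∧ 0 < C ∧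
      ∀ (d : ℕ), 0 < d →
      ∀ (Ω : Type) (_ : MeasurableSpace Ω) (P : Measure Ω), IsProbabilityMeasure P →
      ∀ (n : ℕ), 3 < n →
      ∀ (X : ℕ → Ω → (Fin d → ℝ)), (∀ i, Measurable (X i)) →
      ∀ (s : (Fin d → ℝ) → (Fin d → ℝ) → ℝ),
        Measurable (Function.uncurry s) → (∀ x y, 0 ≤ s x y) →
        (∀ x, ∫ y, s x y = 1) →
        (∀ i, i < n → ∀ g : (Fin d → ℝ) → ℝ, Measurable g → (∃ c, ∀ x, |g x| ≤ c) →
          P[(fun ω => g (X (i + 1) ω)) |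
              ⨆ k ∈ Finset.range (i + 1), MeasurableSpace.comap (X k) inferInstance]
            =ᵐ[P] fun ω => ∫ y, g y * s (X i ω) y) →
      ∀ (L : ℝ), L₀ ≤ L →
      ∀ (ℓ : ℕ∞), 1 ≤ ℓ →
      ∀ (mhat : Ω → Finset (CubeIdx d)),
        (∀ ω, mhat ω ∈ MpartE d ℓ) →
        (∀ ω, gammaSel d n X L ℓ ω (mhat ω)
            ≤ (⨅ m : MpartE d ℓ, gammaSel d n X L ℓ ω (m : Finset (CubeIdx d))) + 1 / n) →
      C * (∫ ω, hellSq d n X ω (sIndA d s) (histEst d n X (mhat ω) ω) ∂P)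
        ≤ sInf {x : ℝ | ∃ m ∈ MpartE d ℓ,
            x = (∫ ω, sInf {y : ℝ | ∃ g ∈ VmD d m,
                    y = hellSq d n X ω (sIndA d s) g} ∂P)
              + penC L n m.card} := by
  refine ⟨192, 1 / 75, by norm_num, by norm_num, ?_⟩
  intro d hd Ω _ P hP n hn X hX s hsm hs0 hs1 hM L hL ℓ _ mhat hmem hsel
  have hs : IsDens d s := ⟨hsm, hs0, hs1⟩
  refine le_csInf ⟨_, {rootC d}, partE_root d ℓ, rfl⟩ ?_
  rintro _ ⟨m, hm, rfl⟩
  have h := risk_bound hd hn hs hX hM hL hmem hsel hm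
  have hp : 0 ≤ penC L n m.card := by
    have : 0 ≤ Real.log n := by linarith [(natlog_le hn).2]
    unfold penC; positivity
  linarith
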